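/- arXiv:1511.06738 — 4 statements merged into one kernel-verified Lean document; each statement's English description precedes it below -/
import Mathlib

section
/- For every n ≥ 1, the mod 2 Steinberg element e_n = Σ̄_n · B̄_n in the group algebra (ℤ/2)[GL_n(ℤ/2)] is idempotent: e_n * e_n = e_n. -/
open MonoidAlgebra
open scoped Classical

/-- The sum of all permutation matrices in the group algebra `(ℤ/2)[GL_n(ℤ/2)]`. -/
noncomputable def SigmaBar (n : ℕ) : MonoidAlgebra (ZMod 2) (GL (Fin n) (ZMod 2)) :=
  ∑ g : GL (Fin n) (ZMod 2),
    if ∃ σ : Equiv.Perm (Fin n),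
        (g : Matrix (Fin n) (Fin n) (ZMod 2)) = σ.permMatrix (ZMod 2)
    then MonoidAlgebra.single g 1 else 0

/-- The sum of all invertible upper-triangular matrices in `(ℤ/2)[GL_n(ℤ/2)]`. -/
noncomputable def BBar (n : ℕ) : MonoidAlgebra (ZMod 2) (GL (Fin n) (ZMod 2)) :=
  ∑ g : GL (Fin n) (ZMod 2),
    if Matrix.BlockTriangular (g : Matrix (Fin n) (Fin n) (ZMod 2)) id
    then MonoidAlgebra.single g 1 else 0

/-- The mod 2 Steinberg element `e_n = Σ̄_n ⬝ B̄_n`. -/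
noncomputable def SteinbergElement (n : ℕ) : MonoidAlgebra (ZMod 2) (GL (Fin n) (ZMod 2)) :=
  SigmaBar n * BBar n

namespace Stein

variable {n : ℕ}

abbrev G (n : ℕ) := GL (Fin n) (ZMod 2)

theorem zne {x : ZMod 2} (h : x ≠ 0) : x = 1 := by
  revert x; decide

/-- permutation matrix as group element: `e_a ↦ e_{w a}` -/
noncomputable def P (w : Equiv.Perm (Fin n)) : G n where
  val := (w⁻¹).permMatrix (ZMod 2)
  inv := w.permMatrix (ZMod 2)
  val_inv := by rw [← Matrix.permMatrix_mul]; simp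
  inv_val := by rw [← Matrix.permMatrix_mul]; simp

theorem P_mul_apply (w : Equiv.Perm (Fin n)) (x : G n) (a b : Fin n) :
    (P w * x).val a b = x.val (w⁻¹ a) b := by
  change ((w⁻¹).permMatrix (ZMod 2) * x.val) a b = _
  rw [Equiv.Perm.permMatrix, PEquiv.toMatrix_toPEquiv_mul]; rfl

theorem mul_P_apply (w : Equiv.Perm (Fin n)) (x : G n) (a b : Fin n) :
    (x * P w).val a b = x.val a (w b) := by
  change (x.val * (w⁻¹).permMatrix (ZMod 2)) a b = _
  rw [Equiv.Perm.permMatrix, PEquiv.mul_toMatrix_toPEquiv]; rfl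

theorem P_apply (w : Equiv.Perm (Fin n)) (a b : Fin n) :
    (P w).val a b = if a = w b then 1 else 0 := by
  have := mul_P_apply w 1 a b
  rw [one_mul] at this
  rw [this]; simp [Matrix.one_apply]

theorem P_one : P (1 : Equiv.Perm (Fin n)) = 1 := by
  ext a b; rw [P_apply, Units.val_one, Matrix.one_apply]; rfl

theorem P_mul (v w : Equiv.Perm (Fin n)) : P (v * w) = P v * P w := by
  ext a b; rw [mul_P_apply, P_apply, P_apply]; rfl

theorem P_inv (w : Equiv.Perm (Fin n)) : (P w)⁻¹ = P w⁻¹ := by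
  rw [inv_eq_iff_mul_eq_one, ← P_mul]; simp [P_one]

theorem P_inj : Function.Injective (P : Equiv.Perm (Fin n) → G n) := by
  intro v w h
  ext b : 1
  have := P_apply w (v b) b
  rw [← h, P_apply] at this
  by_contra hne
  simp [hne] at this

/-- transvection -/
noncomputable def T (c d : Fin n) (h : c ≠ d) : G n where
  val := Matrix.transvection c d 1
  inv := Matrix.transvection c d 1
  val_inv := by
    rw [Matrix.transvection_mul_transvection_same _ _ h]
    have : (1 + 1 : ZMod 2) = 0 := by decide
    rw [this, Matrix.transvection_zero]
  inv_val := by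
    rw [Matrix.transvection_mul_transvection_same _ _ h]
    have : (1 + 1 : ZMod 2) = 0 := by decide
    rw [this, Matrix.transvection_zero]

theorem T_inv (c d : Fin n) (h : c ≠ d) : (T c d h)⁻¹ = T c d h := rfl

theorem T_mul_self (c d : Fin n) (h : c ≠ d) : T c d h * T c d h = 1 := by
  have := inv_mul_cancel (T c d h)
  rwa [T_inv] at this

theorem T_mul_apply (c d : Fin n) (h : c ≠ d) (x : G n) (a b : Fin n) :
    (T c d h * x).val a b = x.val a b + if a = c then x.val d b else 0 := by
  change (Matrix.transvection c d (1 : ZMod 2) * x.val : Matrix (Fin n) (Fin n) (ZMod 2)) a b = _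
  split_ifs with h1
  · subst h1; simp
  · simp [h1]

theorem mul_T_apply (c d : Fin n) (h : c ≠ d) (x : G n) (a b : Fin n) :
    (x * T c d h).val a b = x.val a b + if b = d then x.val a c else 0 := by
  change (x.val * Matrix.transvection c d (1 : ZMod 2) : Matrix (Fin n) (Fin n) (ZMod 2)) a b = _
  split_ifs with h1
  · subst h1; simp
  · simp [h1]

theorem T_apply (c d : Fin n) (h : c ≠ d) (a b : Fin n) :
    (T c d h).val a b = (if a = b then 1 else 0) + if a = c ∧ b = d then 1 else 0 := by
  have := T_mul_apply c d h 1 a b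
  rw [mul_one] at this
  rw [this]
  simp only [Units.val_one, Matrix.one_apply]
  congr 1
  by_cases h1 : a = c <;> simp [h1, eq_comm]

theorem P_T (w : Equiv.Perm (Fin n)) (c d : Fin n) (h : c ≠ d) :
    P w * T c d h = T (w c) (w d) (by simpa using h) * P w := by
  ext a b
  rw [P_mul_apply, mul_P_apply, T_apply, T_apply]
  have e : ∀ c, w⁻¹ a = c ↔ a = w c := fun c => Equiv.Perm.inv_eq_iff_eq
  have e' : w b = w d ↔ b = d := w.injective.eq_iff
  simp only [e, e']

theorem braid (c d : Fin n) (h : c ≠ d) :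
    T c d h * P (Equiv.swap c d) * T c d h = T d c h.symm := by
  ext a b
  rw [mul_T_apply, T_mul_apply, T_mul_apply, T_apply]
  simp only [P_apply]
  have h2 := h.symm
  by_cases ha : a = c
  · subst ha
    by_cases hb : b = a
    · subst hb; simp [h, h2]
    · by_cases hb' : b = d
      · subst hb'; simp [h, h2]; try decide
      · simp [h, h2, hb, hb', Equiv.swap_apply_of_ne_of_ne, eq_comm]
        try grind
  · by_cases ha' : a = d
    · subst ha'
      by_cases hb : b = c
      · subst hb; simp [h, h2]
      · by_cases hb' : b = a
        · subst hb'; simp [h, h2]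
        · simp [h, h2, hb, hb', Equiv.swap_apply_of_ne_of_ne]
          try grind
    · by_cases hb : b = c
      · subst hb; simp [h, h2, ha, ha']
      · by_cases hb' : b = d
        · subst hb'; simp [h, h2, ha, ha']
        · simp [h, h2, hb, hb', ha, ha', Equiv.swap_apply_of_ne_of_ne]

noncomputable abbrev o (g : G n) : MonoidAlgebra (ZMod 2) (G n) := MonoidAlgebra.of (ZMod 2) (G n) g

theorem o_one : o (1 : G n) = 1 := map_one _

noncomputable def gs (A : G n → Prop) : MonoidAlgebra (ZMod 2) (G n) :=
  ∑ g : G n, if A g then o g else 0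

theorem gs_congr {A A' : G n → Prop} (h : ∀ x, A x ↔ A' x) : gs A = gs A' := by
  have : A = A' := funext fun x => propext (h x)
  rw [this]

theorem gs_conj {A A' : G n → Prop} (h k : G n) (H : ∀ x, A x ↔ A' (h * x * k⁻¹)) :
    o h * gs A = gs A' * o k := by
  unfold gs
  rw [Finset.mul_sum, Finset.sum_mul]
  refine Fintype.sum_equiv ((Equiv.mulLeft h).trans (Equiv.mulRight k⁻¹)) _ _ ?_
  intro x
  simp only [Equiv.trans_apply, Equiv.coe_mulLeft, Equiv.coe_mulRight, ← H, mul_ite, ite_mul,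
    mul_zero, zero_mul, ← map_mul, inv_mul_cancel_right]

theorem gs_split {A A' : G n → Prop} (u : G n) (H : ∀ x, A x ↔ (A' x ∨ A' (u⁻¹ * x)))
    (H' : ∀ x, A' x → ¬ A' (u⁻¹ * x)) : gs A = (1 + o u) * gs A' := by
  rw [add_mul, one_mul, gs_conj (A' := fun x => A' (u⁻¹ * x)) u 1 (by simp), o_one, mul_one]
  unfold gs
  rw [← Finset.sum_add_distrib]
  refine Finset.sum_congr rfl fun x _ => ?_
  have := H x
  have := H' x
  by_cases h1 : A' x <;> by_cases h2 : A' (u⁻¹ * x) <;> simp_all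

/-- support condition -/
def A (R : Fin n → Fin n → Prop) (x : G n) : Prop := ∀ a b, x.val a b ≠ 0 → a = b ∨ R a b

theorem A_diag {R : Fin n → Fin n → Prop} (τ : Equiv.Perm (Fin n))
    (hR : ∀ a b, R a b → τ a < τ b) {x : G n} (hx : A R x) (a : Fin n) : x.val a a = 1 := by
  apply zne
  have hdet : x.val.det ≠ 0 := by
    have := (Matrix.isUnit_iff_isUnit_det x.val).1 x.isUnit
    exact this.ne_zero
  rw [← Matrix.det_submatrix_equiv_self τ.symm, Matrix.det_of_isUpperTriangular] at hdet
  · have := Finset.prod_ne_zero_iff.1 hdet (τ a) (Finset.mem_univ _)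
    simpa using this
  · intro i j hij
    by_contra hne
    rcases hx _ _ hne with h | h
    · have := τ.symm.injective h
      subst this; exact lt_irrefl _ hij
    · have := hR _ _ h
      simp at this
      exact lt_asymm this hij

theorem A_sub {R : Fin n → Fin n → Prop} {c d : Fin n} (hcd : c ≠ d) (x : G n) :
    A (fun a b => R a b ∧ ¬ (a = c ∧ b = d)) x ↔ A R x ∧ x.val c d = 0 := by
  constructor
  · intro h
    refine ⟨fun a b hab => (h a b hab).imp id And.left, ?_⟩
    by_contra hne
    rcases h _ _ hne with h | h
    · exact hcd h
    · exact h.2 ⟨rfl, rfl⟩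
  · rintro ⟨h, h0⟩ a b hab
    rcases h a b hab with h | h
    · exact Or.inl h
    · refine Or.inr ⟨h, ?_⟩
      rintro ⟨rfl, rfl⟩
      exact hab h0

theorem A_T {R : Fin n → Fin n → Prop} {c d : Fin n} (hcd : c ≠ d) (hR : R c d)
    (ht : ∀ b, R d b → R c b) {x : G n} (hx : A R x) : A R (T c d hcd * x) := by
  intro a b hab
  rw [T_mul_apply] at hab
  by_cases h : x.val a b = 0
  · by_cases hac : a = c
    · subst hac
      rw [h] at hab
      simp at hab
      rcases hx _ _ hab with h | h
      · subst h; exact Or.inr hR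
      · exact Or.inr (ht _ h)
    · simp [h, hac] at hab
  · exact hx _ _ h

theorem A_split {R : Fin n → Fin n → Prop} (τ : Equiv.Perm (Fin n))
    (hτ : ∀ a b, R a b → τ a < τ b) {c d : Fin n} (hcd : c ≠ d) (hR : R c d)
    (ht : ∀ b, R d b → R c b) :
    gs (A R) = (1 + o (T c d hcd)) * gs (A (fun a b => R a b ∧ ¬ (a = c ∧ b = d))) := by
  have e : ∀ x : G n, A R x → (T c d hcd * x).val c d = x.val c d + 1 := by
    intro x hx
    rw [T_mul_apply, A_diag τ hτ hx]; simp
  apply gs_split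
  · intro x
    rw [A_sub hcd, A_sub hcd, T_inv]
    constructor
    · intro hx
      by_cases h : x.val c d = 0
      · exact Or.inl ⟨hx, h⟩
      · refine Or.inr ⟨A_T hcd hR ht hx, ?_⟩
        rw [e x hx, zne h]; decide
    · rintro (h | h)
      · exact h.1
      · have := A_T hcd hR ht h.1
        rwa [← mul_assoc, T_mul_self, one_mul] at this
  · intro x
    rw [A_sub hcd, A_sub hcd, T_inv]
    rintro ⟨h, h0⟩ ⟨_, h1⟩
    rw [e x h, h0] at h1
    exact absurd h1 (by decide)

/-- upper triangular -/
noncomputable def B (n : ℕ) : MonoidAlgebra (ZMod 2) (G n) := gs (A (fun a b => a < b))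

noncomputable def S (n : ℕ) : MonoidAlgebra (ZMod 2) (G n) := ∑ w : Equiv.Perm (Fin n), o (P w)

theorem B_eq : BBar n = B n := by
  unfold BBar B gs
  refine Finset.sum_congr rfl fun x _ => ?_
  have : Matrix.BlockTriangular x.val id ↔ A (fun a b => a < b) x := by
    constructor
    · intro h a b hab
      by_contra hh
      push Not at hh
      exact hab (h (show b < a from lt_of_le_of_ne hh.2 (Ne.symm hh.1)))
    · intro h a b hab
      by_contra hh
      have hab : b < a := hab
      rcases h a b hh with h | h
      · exact hab.ne' h
      · exact lt_asymm h hab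
  simp only [this]
  rfl

theorem S_eq : SigmaBar n = S n := by
  unfold SigmaBar S
  rw [← Finset.sum_filter]
  symm
  refine Finset.sum_bij (fun w _ => P w) ?_ ?_ ?_ ?_
  · intro w _
    simp only [Finset.mem_filter, Finset.mem_univ, true_and]
    exact ⟨w⁻¹, rfl⟩
  · intro v _ w _ h
    exact P_inj h
  · intro g hg
    simp only [Finset.mem_filter, Finset.mem_univ, true_and] at hg
    obtain ⟨σ, hσ⟩ := hg
    refine ⟨σ⁻¹, Finset.mem_univ _, ?_⟩
    apply Units.ext
    rw [hσ]
    change (σ⁻¹⁻¹).permMatrix (ZMod 2) = _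
    rw [inv_inv]
  · intro w _
    rfl

theorem S_mul (w : Equiv.Perm (Fin n)) : S n * o (P w) = S n := by
  unfold S
  rw [Finset.sum_mul]
  refine Fintype.sum_equiv (Equiv.mulRight w) _ _ ?_
  intro v
  simp only [Equiv.coe_mulRight, P_mul, map_mul]

theorem two (x : MonoidAlgebra (ZMod 2) (G n)) : x + x = 0 := by
  rw [← two_smul (ZMod 2) x]
  have : (2 : ZMod 2) = 0 := by decide
  rw [this, zero_smul]

theorem B_mul_T (c d : Fin n) (h : c < d) : B n * o (T c d h.ne) = B n := by
  have : o 1 * B n = B n * o (T c d h.ne) := by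
    apply gs_conj
    intro x
    rw [T_inv, one_mul]
    have key : ∀ x : G n, A (fun a b => a < b) x → A (fun a b => a < b) (x * T c d h.ne) := by
      intro x hx a b hab
      rw [mul_T_apply] at hab
      by_cases h0 : x.val a b = 0
      · by_cases hb : b = d
        · subst hb
          rw [h0] at hab
          simp at hab
          rcases hx _ _ hab with h1 | h1
          · subst h1; exact Or.inr h
          · exact Or.inr (h1.trans h)
        · simp [h0, hb] at hab
      · exact hx _ _ h0
    refine ⟨key x, fun hx => ?_⟩
    have := key _ hx
    rwa [mul_assoc, T_mul_self, mul_one] at this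
  rw [← this, o_one, one_mul]

variable {m : ℕ}

/-- order facts about adjacent transposition -/
theorem swap_lt (i : Fin m) (a b : Fin (m+1)) (hab : ¬ (a = i.castSucc ∧ b = i.succ)) (h : a < b) :
    Equiv.swap i.castSucc i.succ a < Equiv.swap i.castSucc i.succ b := by
  simp only [Equiv.swap_apply_def, Fin.ext_iff, Fin.lt_def, Fin.val_castSucc, Fin.val_succ] at *
  split_ifs <;> simp <;> omega

theorem B_split (i : Fin m) : B (m+1) = (1 + o (T i.castSucc i.succ i.castSucc_lt_succ.ne)) *
    gs (A (fun a b => a < b ∧ ¬ (a = i.castSucc ∧ b = i.succ))) :=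
  A_split (Equiv.refl _) (fun _ _ h => h) _ i.castSucc_lt_succ
    (fun _ h => i.castSucc_lt_succ.trans h)

theorem A_conj_P {R R' : Fin n → Fin n → Prop} (w : Equiv.Perm (Fin n))
    (H : ∀ a b, R a b ↔ R' (w a) (w b)) :
    o (P w) * gs (A R) = gs (A R') * o (P w) := by
  apply gs_conj
  intro x
  rw [P_inv]
  unfold A
  simp only [mul_P_apply, P_mul_apply]
  constructor
  · intro h a b hab
    rcases h _ _ hab with h | h
    · left; simpa using h
    · right; simpa using (H _ _).1 h
  · intro h a b hab
    rcases h (w a) (w b) (by simpa using hab) with h | h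
    · left; simpa using h
    · right; exact (H _ _).2 h

theorem swap_R (i : Fin m) (a b : Fin (m+1)) : (a < b ∧ ¬ (a = i.castSucc ∧ b = i.succ)) ↔
    (Equiv.swap i.castSucc i.succ a < Equiv.swap i.castSucc i.succ b ∧
      ¬ (Equiv.swap i.castSucc i.succ a = i.castSucc ∧
         Equiv.swap i.castSucc i.succ b = i.succ)) := by
  have key : ∀ a b : Fin (m+1), (a < b ∧ ¬ (a = i.castSucc ∧ b = i.succ)) →
    (Equiv.swap i.castSucc i.succ a < Equiv.swap i.castSucc i.succ b ∧
      ¬ (Equiv.swap i.castSucc i.succ a = i.castSucc ∧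
         Equiv.swap i.castSucc i.succ b = i.succ)) := by
    rintro a b ⟨h, h'⟩
    refine ⟨swap_lt i a b h' h, ?_⟩
    rintro ⟨h1, h2⟩
    have h1 := congrArg (Equiv.swap i.castSucc i.succ) h1
    have h2 := congrArg (Equiv.swap i.castSucc i.succ) h2
    simp at h1 h2
    subst h1 h2
    exact lt_asymm h i.castSucc_lt_succ
  refine ⟨key a b, fun h => ?_⟩
  simpa using key _ _ h

theorem hecke (i : Fin m) : S (m+1) * B (m+1) * (o (P (Equiv.swap i.castSucc i.succ)) *
    (1 + o (T i.castSucc i.succ i.castSucc_lt_succ.ne))) = S (m+1) * B (m+1) := by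
  set s := o (P (Equiv.swap i.castSucc i.succ)) with hs
  set u := o (T i.castSucc i.succ i.castSucc_lt_succ.ne) with hu
  set H := gs (A (fun a b : Fin (m+1) => a < b ∧ ¬ (a = i.castSucc ∧ b = i.succ))) with hH
  have hB : B (m+1) = (1 + u) * H := B_split i
  have hsH : s * H = H * s := A_conj_P _ (swap_R i)
  have huH : u * H = H * u := by
    apply gs_conj
    have hlt := i.castSucc_lt_succ
    have key : ∀ x : G (m+1), A (fun a b => a < b ∧ ¬ (a = i.castSucc ∧ b = i.succ)) x →
        A (fun a b => a < b ∧ ¬ (a = i.castSucc ∧ b = i.succ))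
        (T i.castSucc i.succ hlt.ne * x * T i.castSucc i.succ hlt.ne) := by
      intro x hx
      have hx1 := hx
      rw [A_sub hlt.ne] at hx ⊢
      have d := A_diag (Equiv.refl _) (fun _ _ h => h) hx.1
      constructor
      · have h1 := A_T (R := fun a b => a < b) hlt.ne hlt (fun _ h => hlt.trans h) hx.1
        intro a b hab
        rw [mul_T_apply] at hab
        by_cases h0 : (T i.castSucc i.succ hlt.ne * x).val a b = 0
        · by_cases hb : b = i.succ
          · subst hb
            rw [h0] at hab
            simp only [if_true, zero_add] at hab
            rcases h1 _ _ hab with h1 | h1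
            · subst h1; exact Or.inr hlt
            · exact Or.inr (h1.trans hlt)
          · simp [h0, hb] at hab
        · exact h1 _ _ h0
      · have h10 : x.val i.succ i.castSucc = 0 := by
          by_contra hne
          rcases hx.1 _ _ hne with h | h
          · exact hlt.ne' h
          · exact lt_asymm h hlt
        rw [mul_T_apply, T_mul_apply, T_mul_apply]
        simp only [if_true, d, hx.2, h10]
        decide
    intro x
    rw [T_inv]
    refine ⟨key x, fun hx => ?_⟩
    have := key _ hx
    rwa [mul_assoc, mul_assoc, mul_assoc, T_mul_self, mul_one, ← mul_assoc, T_mul_self,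
      one_mul] at this
  have hSs : S (m+1) * s = S (m+1) := S_mul _
  have hbr : u * s * u = s * u * s := by
    simp only [hu, hs, ← map_mul]
    rw [braid, P_T, mul_assoc, ← P_mul]
    simp [P_one]
  have hc : S (m+1) * ((1 + u) * s * (1 + u)) = S (m+1) * (1 + u) := by
    have : (1 + u) * s * (1 + u) = s + s * u + (u * s + u * s * u) := by noncomm_ring
    rw [this, hbr, mul_add, mul_add, mul_add, hSs, ← mul_assoc, hSs, ← mul_assoc, ← mul_assoc,
      ← mul_assoc, hSs, two, add_zero, mul_add, mul_one]
  have hco : H * (s * (1 + u)) = s * (1 + u) * H := by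
    rw [← mul_assoc, ← hsH, mul_assoc, mul_assoc, mul_add, add_mul, huH, mul_one, one_mul]
  rw [hB]
  calc S (m+1) * ((1 + u) * H) * (s * (1 + u)) = S (m+1) * ((1+u) * (H * (s * (1 + u)))) := by
        simp only [mul_assoc]
    _ = S (m+1) * ((1 + u) * s * (1 + u)) * H := by rw [hco]; simp only [mul_assoc]
    _ = _ := by rw [hc, mul_assoc]

theorem perm_mono (w : Equiv.Perm (Fin (m+1))) (h : ∀ i : Fin m, w i.castSucc < w i.succ) :
    w = 1 := by
  have hm : StrictMono w := Fin.strictMono_iff_lt_succ.2 h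
  have := Subsingleton.elim (hm.orderIsoOfSurjective _ w.surjective) (OrderIso.refl _)
  ext x
  have := congrArg (fun f => (f x).val) this
  simpa using this

noncomputable def V (w : Equiv.Perm (Fin n)) : MonoidAlgebra (ZMod 2) (G n) :=
  gs (A (fun a b => b < a ∧ w⁻¹ a < w⁻¹ b))

theorem V_one : V (1 : Equiv.Perm (Fin n)) = 1 := by
  unfold V
  have : ∀ x : G n, A (fun a b => b < a ∧ (1 : Equiv.Perm (Fin n))⁻¹ a <
      (1 : Equiv.Perm (Fin n))⁻¹ b) x ↔ x = 1 := by
    intro x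
    constructor
    · intro h
      have d := A_diag (Equiv.refl _) (fun _ _ h => by simpa using h.2) h
      ext a b
      by_cases hab : a = b
      · subst hab; rw [d]; simp
      · simp only [Units.val_one, Matrix.one_apply, hab, if_false]
        by_contra hne
        rcases h _ _ hne with h | h
        · exact hab h
        · simp at h; exact lt_asymm h.1 h.2
    · rintro rfl a b hab
      left
      by_contra hne
      simp [Matrix.one_apply, hne] at hab
  rw [gs_congr this]
  unfold gs
  simp [MonoidAlgebra.one_def]

theorem V_step (w : Equiv.Perm (Fin (m+1))) (i : Fin m) (h : w⁻¹ i.succ < w⁻¹ i.castSucc) :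
    S (m+1) * B (m+1) * (V w * o (P w)) =
    S (m+1) * B (m+1) * (V (Equiv.swap i.castSucc i.succ * w) *
      o (P (Equiv.swap i.castSucc i.succ * w))) := by
  have hlt := i.castSucc_lt_succ
  have h1 : V w = (1 + o (T i.succ i.castSucc hlt.ne')) * gs (A (fun a b =>
      (b < a ∧ w⁻¹ a < w⁻¹ b) ∧ ¬ (a = i.succ ∧ b = i.castSucc))) := by
    refine A_split w⁻¹ (fun _ _ h => h.2) _ ⟨hlt, h⟩ ?_
    rintro b ⟨hb, hb'⟩
    exact ⟨hb.trans hlt, h.trans hb'⟩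
  have h2 : o (P (Equiv.swap i.castSucc i.succ)) * V (Equiv.swap i.castSucc i.succ * w) =
      gs (A (fun a b => (b < a ∧ w⁻¹ a < w⁻¹ b) ∧ ¬ (a = i.succ ∧ b = i.castSucc))) *
      o (P (Equiv.swap i.castSucc i.succ)) := by
    apply A_conj_P
    intro a b
    have := swap_R i b a
    simp only [mul_inv_rev, Equiv.swap_inv, Equiv.Perm.mul_apply]
    constructor
    · rintro ⟨hba, hw⟩
      have : ¬ (b = i.castSucc ∧ a = i.succ) := by
        rintro ⟨rfl, rfl⟩
        simp at hw
        exact lt_asymm h hw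
      have := (swap_R i b a).1 ⟨hba, this⟩
      exact ⟨⟨this.1, hw⟩, fun hh => this.2 hh.symm⟩
    · rintro ⟨⟨h3, h4⟩, h5⟩
      exact ⟨((swap_R i b a).2 ⟨h3, fun hh => h5 hh.symm⟩).1, h4⟩
  have h3 : o (P w) = o (P (Equiv.swap i.castSucc i.succ)) *
      o (P (Equiv.swap i.castSucc i.succ * w)) := by
    rw [← map_mul, ← P_mul, ← mul_assoc, Equiv.swap_mul_self, one_mul]
  have h4 : (1 + o (T i.succ i.castSucc hlt.ne')) * o (P (Equiv.swap i.castSucc i.succ)) =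
      o (P (Equiv.swap i.castSucc i.succ)) * (1 + o (T i.castSucc i.succ hlt.ne)) := by
    rw [add_mul, mul_add, one_mul, mul_one, ← map_mul, ← map_mul, P_T]
    simp
  calc _ = S (m+1) * B (m+1) * ((1 + o (T i.succ i.castSucc hlt.ne')) *
        (gs (A (fun a b => (b < a ∧ w⁻¹ a < w⁻¹ b) ∧ ¬ (a = i.succ ∧ b = i.castSucc))) *
      o (P (Equiv.swap i.castSucc i.succ))) * o (P (Equiv.swap i.castSucc i.succ * w))) := by
        rw [h1, h3]; simp only [mul_assoc]
    _ = S (m+1) * B (m+1) * (((1 + o (T i.succ i.castSucc hlt.ne')) *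
        o (P (Equiv.swap i.castSucc i.succ))) * (V (Equiv.swap i.castSucc i.succ * w) *
          o (P (Equiv.swap i.castSucc i.succ * w)))) := by
        rw [← h2]; simp only [mul_assoc]
    _ = _ := by
        rw [h4, ← mul_assoc, hecke]

theorem chain (w : Equiv.Perm (Fin (m+1))) :
    S (m+1) * B (m+1) * (V w * o (P w)) = S (m+1) * B (m+1) := by
  induction hf : toLex (fun a => w⁻¹ a) using WellFoundedLT.induction generalizing w with
  | ind f ih =>
    subst hf
    by_cases h : ∀ i : Fin m, w⁻¹ i.castSucc < w⁻¹ i.succ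
    · have := perm_mono _ h
      rw [inv_eq_one] at this
      subst this
      rw [V_one, P_one, o_one, mul_one, mul_one]
    · push Not at h
      obtain ⟨i, hi⟩ := h
      have hi : w⁻¹ i.succ < w⁻¹ i.castSucc :=
        lt_of_le_of_ne hi (fun hh => i.castSucc_lt_succ.ne' (w⁻¹.injective hh))
      rw [V_step w i hi]
      refine ih _ ?_ _ rfl
      refine ⟨i.castSucc, ?_, ?_⟩
      · intro j hj
        have h1 : j ≠ i.castSucc := hj.ne
        have h2 : j ≠ i.succ := (hj.trans i.castSucc_lt_succ).ne
        simp [Equiv.swap_apply_of_ne_of_ne h1 h2]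
      · simpa using hi

theorem cell_zero (w : Equiv.Perm (Fin (m+1))) (h : w ≠ Fin.revPerm) :
    B (m+1) * (o (P w) * B (m+1)) = 0 := by
  have : ∃ i : Fin m, w i.castSucc < w i.succ := by
    by_contra hh
    push Not at hh
    apply h
    have := perm_mono (Fin.revPerm * w) (fun i => by
      simp only [Equiv.Perm.mul_apply, Fin.revPerm_apply, Fin.rev_lt_rev]
      exact lt_of_le_of_ne (hh i) (fun hh => i.castSucc_lt_succ.ne' (w.injective hh)))
    have h2 := eq_inv_of_mul_eq_one_right this
    rw [h2]; rfl
  obtain ⟨i, hi⟩ := this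
  have : B (m+1) * o (P w) * (1 + o (T i.castSucc i.succ i.castSucc_lt_succ.ne)) = 0 := by
    rw [mul_add, mul_one, mul_assoc, ← map_mul, P_T, map_mul, ← mul_assoc, B_mul_T _ _ hi, two]
  rw [← mul_assoc]
  conv_lhs => arg 2; rw [B_split i]
  rw [← mul_assoc, this, zero_mul]

theorem main : S (m+1) * B (m+1) * (S (m+1) * B (m+1)) = S (m+1) * B (m+1) := by
  have h1 : B (m+1) * (S (m+1) * B (m+1)) = B (m+1) * (o (P Fin.revPerm) * B (m+1)) := by
    conv_lhs => rw [S, Finset.sum_mul, Finset.mul_sum]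
    refine Finset.sum_eq_single_of_mem _ (Finset.mem_univ _) fun w _ hw => cell_zero w hw
  have h2 : o (P Fin.revPerm) * B (m+1) = V Fin.revPerm * o (P Fin.revPerm) := by
    apply A_conj_P
    intro a b
    have : (Fin.revPerm : Equiv.Perm (Fin (m+1)))⁻¹ = Fin.revPerm := rfl
    simp [this]
  rw [mul_assoc, h1, h2, ← mul_assoc, chain]

end Stein

/-- The mod 2 Steinberg element is idempotent. -/
theorem steinbergElement_idem (n : ℕ) (hn : 1 ≤ n) :
    SteinbergElement n * SteinbergElement n = SteinbergElement n := by
  obtain ⟨m, rfl⟩ : ∃ m, n = m + 1 := ⟨n - 1, by omega⟩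
  unfold SteinbergElement
  rw [Stein.B_eq, Stein.S_eq]
  exact Stein.main
end

section
/- For every n ≥ 1, the conjugate mod 2 Steinberg element e'_n = B̄_n · Σ̄_n in the group algebra (ℤ/2)[GL_n(ℤ/2)] is idempotent: e'_n * e'_n = e'_n. -/
open MonoidAlgebra
open scoped Classical

/-- The conjugate mod 2 Steinberg element `e'_n = B̄_n ⬝ Σ̄_n`. -/
noncomputable def ConjSteinbergElement (n : ℕ) : MonoidAlgebra (ZMod 2) (GL (Fin n) (ZMod 2)) :=
  BBar n * SigmaBar n


namespace StAux

abbrev G (n : ℕ) := GL (Fin n) (ZMod 2)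

/-- permutation matrix as a unit -/
noncomputable def P {n : ℕ} (σ : Equiv.Perm (Fin n)) : G n where
  val := σ.permMatrix (ZMod 2)
  inv := (σ⁻¹).permMatrix (ZMod 2)
  val_inv := by rw [← Matrix.permMatrix_mul]; simp
  inv_val := by rw [← Matrix.permMatrix_mul]; simp

lemma P_mul {n : ℕ} (σ τ : Equiv.Perm (Fin n)) : P σ * P τ = P (τ * σ) := by
  apply Units.ext
  simp [P, Matrix.permMatrix_mul]

lemma P_one {n : ℕ} : P (1 : Equiv.Perm (Fin n)) = 1 := by
  apply Units.ext
  simp [P]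

lemma P_inj {n : ℕ} : Function.Injective (P (n := n)) := by
  intro σ τ h
  have h2 : σ.permMatrix (ZMod 2) = τ.permMatrix (ZMod 2) := congrArg Units.val h
  ext i
  have := congrFun (congrFun h2 i) (σ i)
  simp [Equiv.Perm.permMatrix, PEquiv.toMatrix_apply] at this
  rw [this]

lemma mul_P {n : ℕ} (A : Matrix (Fin n) (Fin n) (ZMod 2)) (σ : Equiv.Perm (Fin n)) (i j : Fin n) :
    (A * (P σ : Matrix (Fin n) (Fin n) (ZMod 2))) i j = A i (σ⁻¹ j) := by
  simp [P, Equiv.Perm.permMatrix, PEquiv.mul_toMatrix_toPEquiv]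

lemma P_mul_apply {n : ℕ} (A : Matrix (Fin n) (Fin n) (ZMod 2)) (σ : Equiv.Perm (Fin n))
    (i j : Fin n) :
    ((P σ : Matrix (Fin n) (Fin n) (ZMod 2)) * A) i j = A (σ i) j := by
  simp [P, Equiv.Perm.permMatrix, PEquiv.toMatrix_toPEquiv_mul]

/-- being upper triangular -/
def IsB {n : ℕ} (g : G n) : Prop :=
  Matrix.BlockTriangular (g : Matrix (Fin n) (Fin n) (ZMod 2)) id

lemma IsB.mul {n : ℕ} {g h : G n} (hg : IsB g) (hh : IsB h) : IsB (g * h) := by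
  unfold IsB at *
  rw [Units.val_mul]
  exact Matrix.BlockTriangular.mul hg hh

lemma IsB.diag {n : ℕ} {g : G n} (hg : IsB g) (i : Fin n) : g.val i i = 1 := by
  have h1 := Matrix.det_of_isUpperTriangular hg
  have h2 : g.val.det ≠ 0 := ((Matrix.isUnit_iff_isUnit_det _).1 g.isUnit).ne_zero
  rw [h1] at h2
  have h3 := (Finset.prod_ne_zero_iff.1 h2) i (Finset.mem_univ _)
  revert h3
  generalize g.val i i = a
  revert a; decide

lemma SigmaBar_eq (n : ℕ) : SigmaBar n = ∑ σ : Equiv.Perm (Fin n), of (ZMod 2) (G n) (P σ) := by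
  unfold SigmaBar
  rw [← Finset.sum_filter]
  symm
  apply Finset.sum_bij (fun σ _ => P σ)
  · intro σ _
    simp only [Finset.mem_filter, Finset.mem_univ, true_and]
    exact ⟨σ, rfl⟩
  · intro a _ b _ h
    exact P_inj h
  · intro g hg
    simp only [Finset.mem_filter, Finset.mem_univ, true_and] at hg
    obtain ⟨σ, hσ⟩ := hg
    exact ⟨σ, Finset.mem_univ _, Units.ext hσ.symm⟩
  · intro a _
    rfl

lemma BBar_eq (n : ℕ) : BBar n = ∑ g : G n with IsB g, of (ZMod 2) (G n) g := by
  unfold BBar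
  rw [← Finset.sum_filter]
  apply Finset.sum_congr
  · ext g
    rw [Finset.mem_filter, Finset.mem_filter]
    exact Iff.rfl
  · intro g _
    rfl

/-- absorption of an involution in the Borel subgroup -/
lemma BBar_mul {n : ℕ} (b : G n) (hb : IsB b) (hbb : b * b = 1) :
    BBar n * of (ZMod 2) (G n) b = BBar n := by
  rw [BBar_eq, Finset.sum_mul]
  apply Finset.sum_bij (fun g _ => g * b)
  · intro g hg
    simp only [Finset.mem_filter, Finset.mem_univ, true_and] at hg ⊢
    exact hg.mul hb
  · intro a _ c _ h
    exact mul_right_cancel h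
  · intro g hg
    simp only [Finset.mem_filter, Finset.mem_univ, true_and] at hg
    refine ⟨g * b, ?_, ?_⟩
    · simp only [Finset.mem_filter, Finset.mem_univ, true_and]
      exact hg.mul hb
    · rw [mul_assoc, hbb, mul_one]
  · intro a _
    rw [map_mul]

lemma add_self {n : ℕ} (x : MonoidAlgebra (ZMod 2) (G n)) : x + x = 0 := by
  rw [← two_smul (ZMod 2) x]
  have : (2 : ZMod 2) = 0 := rfl
  rw [this, zero_smul]

/-- the unit `1 + v e_iᵀ` with `v i = 0` -/
noncomputable def L {n : ℕ} (v : Fin n → ZMod 2) (i : Fin n) (hv : v i = 0) : G n :=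
  have h : (1 + Matrix.vecMulVec v (Pi.single i 1)) * (1 + Matrix.vecMulVec v (Pi.single i 1))
      = (1 : Matrix (Fin n) (Fin n) (ZMod 2)) := by
    have h2 : Matrix.vecMulVec v (Pi.single i (1 : ZMod 2)) * Matrix.vecMulVec v (Pi.single i 1)
        = 0 := by
      rw [Matrix.vecMulVec_mul_vecMulVec]
      simp [hv]
    have h3 : Matrix.vecMulVec v (Pi.single i (1 : ZMod 2))
        + Matrix.vecMulVec v (Pi.single i (1 : ZMod 2)) = 0 := by
      ext a b
      exact CharTwo.add_self_eq_zero _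
    simp only [mul_add, add_mul, h2, mul_one, one_mul, add_zero]
    rw [add_assoc, h3, add_zero]
  ⟨_, _, h, h⟩

lemma L_sq {n : ℕ} (v : Fin n → ZMod 2) (i : Fin n) (hv : v i = 0) : L v i hv * L v i hv = 1 :=
  Units.ext (L v i hv).val_inv

lemma L_apply {n : ℕ} (v : Fin n → ZMod 2) (i : Fin n) (hv : v i = 0) (r c : Fin n) :
    (L v i hv).val r c = (if r = c then 1 else 0) + (if c = i then v r else 0) := by
  simp [L, Matrix.one_apply, Matrix.vecMulVec_apply, Pi.single_apply]

lemma L_mul_apply {n : ℕ} (v : Fin n → ZMod 2) (i : Fin n) (hv : v i = 0)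
    (A : Matrix (Fin n) (Fin n) (ZMod 2)) (r c : Fin n) :
    ((L v i hv).val * A) r c = A r c + v r * A i c := by
  have : (L v i hv).val = 1 + Matrix.vecMulVec v (Pi.single i 1) := rfl
  rw [this, add_mul, one_mul, Matrix.vecMulVec_mul]
  simp [Matrix.vecMulVec_apply]

lemma exists_pair {n : ℕ} (σ : Equiv.Perm (Fin n)) (h : σ ≠ Fin.revPerm) :
    ∃ p : Fin n × Fin n, p.1 < p.2 ∧ σ⁻¹ p.1 < σ⁻¹ p.2 := by
  by_contra! hc
  apply h
  have hm : StrictMono (Fin.revPerm * σ⁻¹ : Equiv.Perm (Fin n)) := by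
    intro a b hab
    have h1 := hc (a, b) hab
    have h2 : σ⁻¹ b ≠ σ⁻¹ a := fun h => hab.ne' (σ⁻¹.injective h)
    have h3 := lt_of_le_of_ne h1 h2
    simpa using h3
  have h4 : (Fin.revPerm * σ⁻¹ : Equiv.Perm (Fin n)) = 1 := by
    ext a
    have := congrFun (StrictMono.range_inj hm strictMono_id |>.1 (by
      rw [(Equiv.surjective _).range_eq]; simp)) a
    rw [this]; rfl
  rw [mul_inv_eq_one] at h4
  exact h4.symm

lemma conjP_apply {n : ℕ} (g : G n) (σ : Equiv.Perm (Fin n)) (r c : Fin n) :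
    (P σ * g * P σ⁻¹).val r c = g.val (σ r) (σ c) := by
  rw [Units.val_mul, mul_P, Units.val_mul, P_mul_apply, inv_inv]

lemma conjP_sq {n : ℕ} (g : G n) (hg : g * g = 1) (σ : Equiv.Perm (Fin n)) :
    (P σ * g * P σ⁻¹) * (P σ * g * P σ⁻¹) = 1 := by
  have h : P σ⁻¹ * P σ = 1 := by rw [P_mul]; simp [P_one]
  have hinv : P σ * P σ⁻¹ = 1 := by rw [P_mul]; simp [P_one]
  calc _ = P σ * g * (P σ⁻¹ * P σ) * g * P σ⁻¹ := by simp only [mul_assoc]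
    _ = P σ * (g * g) * P σ⁻¹ := by rw [h]; simp only [mul_assoc, one_mul]
    _ = 1 := by rw [hg, mul_one, hinv]

/-- absorb an involution `g` whose conjugate is upper triangular -/
lemma absorb {n : ℕ} (g : G n) (hg : g * g = 1) (σ : Equiv.Perm (Fin n))
    (hB : IsB (P σ * g * P σ⁻¹)) (h : G n) :
    BBar n * of (ZMod 2) (G n) (P σ * (g * h)) = BBar n * of (ZMod 2) (G n) (P σ * h) := by
  have h' : P σ⁻¹ * P σ = 1 := by rw [P_mul]; simp [P_one]
  have : P σ * (g * h) = (P σ * g * P σ⁻¹) * (P σ * h) := by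
    calc _ = P σ * g * 1 * h := by simp only [mul_assoc, one_mul]
      _ = _ := by rw [← h']; simp only [mul_assoc]
  rw [this, map_mul, ← mul_assoc, BBar_mul _ hB (conjP_sq g hg σ)]

/-- first step: only the longest permutation contributes -/
lemma step_one {n : ℕ} (σ : Equiv.Perm (Fin n)) (h : σ ≠ Fin.revPerm) :
    ∑ b : G n with IsB b, BBar n * of (ZMod 2) (G n) (P σ * b) = 0 := by
  obtain ⟨⟨i, j⟩, hij, hs⟩ := exists_pair σ h
  simp only at hij hs
  have hv : (Pi.single i (1 : ZMod 2) : Fin n → ZMod 2) j = 0 := by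
    simp [hij.ne']
  have hx : IsB (L (Pi.single i 1) j hv) := by
    intro r c hrc
    simp only [id] at hrc
    rw [L_apply, if_neg hrc.ne', zero_add]
    split_ifs with hc
    · subst hc
      exact Pi.single_eq_of_ne (by rintro rfl; exact absurd hrc hij.asymm) _
    · rfl
  have hx' : IsB (P σ * L (Pi.single i 1) j hv * P σ⁻¹) := by
    intro r c hrc
    simp only [id] at hrc
    rw [conjP_apply, L_apply, if_neg (fun h => hrc.ne' (σ.injective h)), zero_add]
    split_ifs with hc
    · apply Pi.single_eq_of_ne
      intro hr
      rw [← hc, ← hr] at hs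
      rw [Equiv.Perm.inv_def, Equiv.symm_apply_apply, Equiv.symm_apply_apply] at hs
      exact absurd hrc hs.asymm
    · rfl
  have hsq := L_sq (Pi.single i 1) j hv
  have hne : L (Pi.single i 1) j hv ≠ 1 := by
    intro h
    have := L_apply (Pi.single i 1) j hv i j
    rw [h] at this
    simp [hij.ne] at this
  refine Finset.sum_involution (fun b _ => L (Pi.single i 1) j hv * b) ?_ ?_ ?_ ?_
  · intro b _
    rw [absorb _ hsq σ hx', add_self]
  · intro b _ _ hb
    exact hne (mul_eq_right.1 hb)
  · intro b hb
    simp only [Finset.mem_filter, Finset.mem_univ, true_and] at hb ⊢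
    exact hx.mul hb
  · intro b _
    rw [← mul_assoc, hsq, one_mul]

/-- the pivot: first row that is not a row of the identity, and its first off-diagonal entry -/
structure Piv {n : ℕ} (b : G n) (i j : Fin n) : Prop where
  lt : i < j
  one : b.val i j = 1
  rows : ∀ r < i, ∀ c, r < c → b.val r c = 0
  cols : ∀ c, i < c → c < j → b.val i c = 0

lemma Piv.unique {n : ℕ} {b : G n} {i j i' j' : Fin n} (h : Piv b i j) (h' : Piv b i' j') :
    i = i' ∧ j = j' := by
  have key : ∀ {i j i' j' : Fin n}, Piv b i j → Piv b i' j' → ¬ i < i' := by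
    intro i j i' j' h h' hlt
    have := h'.rows i hlt j h.lt
    rw [h.one] at this
    exact one_ne_zero this
  have hi : i = i' := le_antisymm (not_lt.1 (key h' h)) (not_lt.1 (key h h'))
  subst hi
  refine ⟨rfl, ?_⟩
  have key2 : ∀ {j j' : Fin n}, Piv b i j → Piv b i j' → ¬ j < j' := by
    intro j j' h h' hlt
    have := h'.cols j h.lt hlt
    rw [h.one] at this
    exact one_ne_zero this
  exact le_antisymm (not_lt.1 (key2 h' h)) (not_lt.1 (key2 h h'))

lemma zmod2 {a : ZMod 2} (h : a ≠ 0) : a = 1 := by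
  revert a; decide

lemma Piv.exists {n : ℕ} {b : G n} (hb : IsB b) (h1 : b ≠ 1) :
    ∃ p : Fin n × Fin n, Piv b p.1 p.2 := by
  have hex : ∃ i, ∃ j, i < j ∧ b.val i j ≠ 0 := by
    by_contra! hc
    apply h1
    apply Units.ext
    ext r c
    rcases lt_trichotomy r c with h | h | h
    · rw [hc r c h]; simp [h.ne]
    · subst h; rw [hb.diag]; simp
    · rw [hb h]; simp [h.ne']
  obtain ⟨i, hi, him⟩ := WellFounded.has_min (wellFounded_lt (α := Fin n))
    {i | ∃ j, i < j ∧ b.val i j ≠ 0} hex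
  obtain ⟨j, hj, hjm⟩ := WellFounded.has_min (wellFounded_lt (α := Fin n))
    {j | i < j ∧ b.val i j ≠ 0} hi
  refine ⟨(i, j), hj.1, zmod2 hj.2, ?_, ?_⟩
  · intro r hr c hc
    by_contra h0
    exact him r ⟨c, hc, h0⟩ hr
  · intro c hc hcj
    by_contra h0
    exact hjm c ⟨hc, h0⟩ hcj

/-- the column used for the lower triangular correction -/
def vv {n : ℕ} (b : G n) (i j : Fin n) : Fin n → ZMod 2 := fun r => if i < r then b.val r j else 0

lemma vv_self {n : ℕ} (b : G n) (i j : Fin n) : vv b i j i = 0 := by simp [vv]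

noncomputable def inv1 {n : ℕ} (b : G n) (i j : Fin n) : G n :=
  L (vv b i j) i (vv_self b i j) * (b * P (Equiv.swap i j))

lemma inv1_apply {n : ℕ} {b : G n} {i j : Fin n} (hb : IsB b) (h : Piv b i j) (r c : Fin n) :
    (inv1 b i j).val r c = b.val r c + if i < r ∧ j < c then b.val r j * b.val i c else 0 := by
  have hij := h.lt
  have hsw : (Equiv.swap i j)⁻¹ = Equiv.swap i j := Equiv.swap_inv i j
  unfold inv1
  rw [Units.val_mul, L_mul_apply, Units.val_mul, mul_P, mul_P, hsw]
  have hz : ∀ r c, c < r → b.val r c = 0 := fun r c hrc => hb hrc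
  have hd := hb.diag
  have h1 := h.one
  have h2 := h.rows
  have h3 := h.cols
  have hcc : ∀ a : ZMod 2, a + a = 0 := by decide
  unfold vv
  by_cases hci : c = i
  · subst hci
    rw [Equiv.swap_apply_left, h1]
    rcases lt_trichotomy c r with hr | hr | hr
    · simp [hr, hij.asymm, hz r c hr, hcc]
    · subst hr; simp [h1, hd]
    · simp [hr.asymm, h2 r hr c hr, h2 r hr j (hr.trans hij)]
  by_cases hcj : c = j
  · subst hcj
    rw [Equiv.swap_apply_right, hd]
    rcases lt_trichotomy i r with hr | hr | hr
    · simp [hr, hz r i hr]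
    · subst hr; simp [h1, hd]
    · simp [hr.asymm, h2 r hr i hr, h2 r hr c (hr.trans hij)]
  rw [Equiv.swap_apply_of_ne_of_ne hci hcj]
  by_cases hr : i < r
  · by_cases hjc : j < c
    · simp [hr, hjc]
    · have : b.val i c = 0 := by
        rcases lt_or_gt_of_ne hci with h' | h'
        · exact hz _ _ h'
        · exact h3 c h' (lt_of_le_of_ne (not_lt.1 hjc) hcj)
      simp [hr, hjc, this]
  · simp [hr]

lemma inv1_isB {n : ℕ} {b : G n} {i j : Fin n} (hb : IsB b) (h : Piv b i j) :
    IsB (inv1 b i j) := by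
  intro r c hrc
  have hrc' : c < r := hrc
  rw [inv1_apply hb h, hb hrc, zero_add]
  split_ifs with h'
  · rw [hb (show id j < id r from h'.2.trans hrc'), zero_mul]
  · rfl

lemma inv1_piv {n : ℕ} {b : G n} {i j : Fin n} (hb : IsB b) (h : Piv b i j) :
    Piv (inv1 b i j) i j := by
  refine ⟨h.lt, ?_, ?_, ?_⟩
  · rw [inv1_apply hb h]; simp [h.one]
  · intro r hr c hc
    rw [inv1_apply hb h]; simp [hr.asymm, h.rows r hr c hc]
  · intro c hc hcj
    rw [inv1_apply hb h]; simp [h.cols c hc hcj]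

lemma inv1_inv1 {n : ℕ} {b : G n} {i j : Fin n} (hb : IsB b) (h : Piv b i j) :
    inv1 (inv1 b i j) i j = b := by
  have hv : vv (inv1 b i j) i j = vv b i j := by
    funext r
    unfold vv
    rw [inv1_apply hb h]; simp
  have hs : P (Equiv.swap i j) * P (Equiv.swap i j) = 1 := by
    rw [P_mul, Equiv.swap_mul_self, P_one]
  have : inv1 (inv1 b i j) i j
      = L (vv b i j) i (vv_self b i j) * (inv1 b i j * P (Equiv.swap i j)) := by
    unfold inv1 at hv ⊢
    congr 1
    congr 1
  rw [this]
  unfold inv1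
  rw [← mul_assoc, ← mul_assoc, L_sq, one_mul, mul_assoc, hs, mul_one]

/-- second step: only `b = 1` contributes -/
lemma step_two (n : ℕ) :
    ∑ p : G n × Equiv.Perm (Fin n) with IsB p.1 ∧ p.1 ≠ 1,
      BBar n * of (ZMod 2) (G n) (P Fin.revPerm * (p.1 * P p.2)) = 0 := by
  choose p hp using fun (b : G n) (hb : IsB b) (h1 : b ≠ 1) => Piv.exists hb h1
  have mem : ∀ q : G n × Equiv.Perm (Fin n),
      q ∈ (Finset.univ.filter fun q : G n × Equiv.Perm (Fin n) => IsB q.1 ∧ q.1 ≠ 1) →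
      IsB q.1 ∧ q.1 ≠ 1 := fun q hq => (Finset.mem_filter.1 hq).2
  have ne1 : ∀ {b : G n} {i j : Fin n}, Piv b i j → b ≠ 1 := by
    rintro b i j h rfl
    have := h.one
    simp [h.lt.ne] at this
  refine Finset.sum_involution (fun q hq =>
    (inv1 q.1 (p q.1 (mem q hq).1 (mem q hq).2).1 (p q.1 (mem q hq).1 (mem q hq).2).2,
      q.2 * Equiv.swap (p q.1 (mem q hq).1 (mem q hq).2).1
        (p q.1 (mem q hq).1 (mem q hq).2).2)) ?_ ?_ ?_ ?_
  · rintro ⟨b, τ⟩ hq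
    obtain ⟨hb, h1⟩ := mem _ hq
    have hP := hp b hb h1
    simp only
    generalize p b hb h1 = ij at hP ⊢
    obtain ⟨i, j⟩ := ij
    simp only at hP ⊢
    have hs : P (Equiv.swap i j) * P (τ * Equiv.swap i j) = P τ := by
      rw [P_mul, mul_assoc, Equiv.swap_mul_self, mul_one]
    have : inv1 b i j * P (τ * Equiv.swap i j)
        = L (vv b i j) i (vv_self b i j) * (b * P τ) := by
      unfold inv1
      rw [mul_assoc, mul_assoc, hs]
    rw [this, absorb _ (L_sq _ _ _), add_self]
    intro r c hrc
    have hrc' : c < r := hrc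
    rw [conjP_apply, L_apply, if_neg (fun h => hrc'.ne' (Fin.revPerm.injective h)), zero_add]
    split_ifs with hc
    · unfold vv
      rw [if_neg]
      rw [← hc]
      simpa using hrc'.le
    · rfl
  · rintro ⟨b, τ⟩ hq _ heq
    obtain ⟨hb, h1⟩ := mem _ hq
    have hP := hp b hb h1
    have h2 := congrArg Prod.snd heq
    simp only [mul_eq_left] at h2
    exact hP.lt.ne (Equiv.swap_eq_one_iff.1 h2)
  · rintro ⟨b, τ⟩ hq
    obtain ⟨hb, h1⟩ := mem _ hq
    have hP := hp b hb h1
    simp only [Finset.mem_filter, Finset.mem_univ, true_and]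
    exact ⟨inv1_isB hb hP, ne1 (inv1_piv hb hP)⟩
  · rintro ⟨b, τ⟩ hq
    obtain ⟨hb, h1⟩ := mem _ hq
    have hP := hp b hb h1
    have hB' := inv1_isB hb hP
    have hP' := inv1_piv hb hP
    have hu := (hp _ hB' (ne1 hP')).unique hP'
    simp only
    rw [hu.1, hu.2, inv1_inv1 hb hP, mul_assoc, Equiv.swap_mul_self, mul_one]

lemma main (n : ℕ) : BBar n * SigmaBar n * (BBar n * SigmaBar n) = BBar n * SigmaBar n := by
  have e1 : BBar n * SigmaBar n * BBar n
      = ∑ b : G n with IsB b, BBar n * of (ZMod 2) (G n) (P Fin.revPerm * b) := by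
    have : BBar n * SigmaBar n * BBar n = ∑ σ : Equiv.Perm (Fin n), ∑ b : G n with IsB b,
        BBar n * of (ZMod 2) (G n) (P σ * b) := by
      conv_lhs => rw [SigmaBar_eq, Finset.mul_sum, Finset.sum_mul]
      apply Finset.sum_congr rfl
      intro σ _
      conv_lhs => arg 2; rw [BBar_eq]
      rw [Finset.mul_sum]
      apply Finset.sum_congr rfl
      intro b _
      rw [map_mul, mul_assoc]
    rw [this]
    exact Finset.sum_eq_single _ (fun σ _ h => step_one σ h) (by simp)
  rw [← mul_assoc, e1]
  have e2 : (∑ b : G n with IsB b, BBar n * of (ZMod 2) (G n) (P Fin.revPerm * b)) * SigmaBar n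
      = ∑ q : G n × Equiv.Perm (Fin n) with IsB q.1,
        BBar n * of (ZMod 2) (G n) (P Fin.revPerm * (q.1 * P q.2)) := by
    rw [SigmaBar_eq, Finset.sum_mul_sum, ← Finset.sum_product']
    apply Finset.sum_congr
    · ext q
      simp
    · intro q _
      rw [mul_assoc, ← map_mul, mul_assoc]
  have e3 := step_two n
  have hone : IsB (1 : G n) := by
    unfold IsB
    rw [Units.val_one]
    exact Matrix.blockTriangular_one
  rw [e2, ← Finset.sum_filter_add_sum_filter_not _ (fun q => q.1 ≠ 1), Finset.filter_filter, e3,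
    zero_add, Finset.filter_filter, SigmaBar_eq, Finset.mul_sum]
  symm
  refine Finset.sum_bij (fun σ _ => ((1 : G n), σ * Fin.revPerm)) ?_ ?_ ?_ ?_
  · intro σ _
    simp [hone]
  · intro a _ b _ h
    exact mul_right_cancel (congrArg Prod.snd h)
  · rintro ⟨b, τ⟩ hq
    have hq' := (Finset.mem_filter.1 hq).2.2
    simp only [ne_eq, not_not] at hq'
    refine ⟨τ * Fin.revPerm⁻¹, Finset.mem_univ _, ?_⟩
    rw [hq', inv_mul_cancel_right]
  · intro σ _
    have hr : (Fin.revPerm * Fin.revPerm : Equiv.Perm (Fin n)) = 1 := by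
      ext a; simp
    rw [one_mul, P_mul, mul_assoc, hr, mul_one]

end StAux

/-- The conjugate mod 2 Steinberg element is idempotent. -/
theorem conjSteinbergElement_idem (n : ℕ) (hn : 1 ≤ n) :
    ConjSteinbergElement n * ConjSteinbergElement n = ConjSteinbergElement n := by
  exact StAux.main n
end

section
/- For n ≥ 2, let φ : (ℤ/2)[GL_{n-1}(ℤ/2)] → (ℤ/2)[GL_n(ℤ/2)] be the algebra map induced by the block-diagonal group embedding g ↦ g ⊕ 1 (g placed in the upper-left (n-1)×(n-1) block, with 1 in the (n,n) entry). Then φ(e_{n-1}) * e_n = e_n in (ℤ/2)[GL_n(ℤ/2)]. -/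
open MonoidAlgebra
open scoped Classical

/-- `M ↦ M ⊕ 1` (block diagonal) as a multiplicative monoid homomorphism of matrix rings. -/
def blockDiagHom (m : ℕ) :
    Matrix (Fin m) (Fin m) (ZMod 2) →*
      Matrix (Fin m ⊕ Fin 1) (Fin m ⊕ Fin 1) (ZMod 2) where
  toFun M := Matrix.fromBlocks M 0 0 1
  map_one' := Matrix.fromBlocks_one
  map_mul' A B := by
    rw [Matrix.fromBlocks_multiply]
    simp

/-- The block-diagonal group embedding `GL_{n-1}(ℤ/2) → GL_n(ℤ/2)`, `g ↦ g ⊕ 1`,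
with `g` in the upper-left `(n-1)×(n-1)` block and `1` in the `(n,n)` entry. -/
noncomputable def glEmbed (n : ℕ) (hn : 2 ≤ n) :
    GL (Fin (n - 1)) (ZMod 2) →* GL (Fin n) (ZMod 2) :=
  Units.map
    (((Matrix.reindexAlgEquiv (ZMod 2) (ZMod 2)
          ((finSumFinEquiv (m := n - 1) (n := 1)).trans
            (finCongr (by omega)))).toAlgHom.toRingHom.toMonoidHom).comp
      (blockDiagHom (n - 1)))


namespace SteinbergAux

abbrev G (n : ℕ) := GL (Fin n) (ZMod 2)

theorem z2_ne_zero {a : ZMod 2} (h : a ≠ 0) : a = 1 := by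
  revert a; decide

theorem z2_ne_one {a : ZMod 2} (h : a ≠ 1) : a = 0 := by
  revert a; decide

theorem z2_add_self (a : ZMod 2) : a + a = 0 := by
  revert a; decide

/-- Permutation matrices as a homomorphism: entry `(i, j)` is `1` iff `i = σ j`. -/
noncomputable def pm (n : ℕ) : Equiv.Perm (Fin n) →* G n where
  toFun σ := ⟨(σ⁻¹).permMatrix (ZMod 2), σ.permMatrix (ZMod 2),
    by rw [← Matrix.permMatrix_mul]; simp, by rw [← Matrix.permMatrix_mul]; simp⟩
  map_one' := by apply Units.ext; simp
  map_mul' σ τ := by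
    apply Units.ext
    simp [← Matrix.permMatrix_mul]

theorem pm_mul_apply {n : ℕ} (σ : Equiv.Perm (Fin n)) (g : G n) (i j : Fin n) :
    (pm n σ * g).1 i j = g.1 (σ⁻¹ i) j := by
  simp [pm, Equiv.Perm.permMatrix, PEquiv.toMatrix_toPEquiv_mul]

theorem mul_pm_apply {n : ℕ} (σ : Equiv.Perm (Fin n)) (g : G n) (i j : Fin n) :
    (g * pm n σ).1 i j = g.1 i (σ j) := by
  simp [pm, Equiv.Perm.permMatrix, PEquiv.mul_toMatrix_toPEquiv]
  rfl

theorem pm_apply {n : ℕ} (σ : Equiv.Perm (Fin n)) (i j : Fin n) :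
    (pm n σ).1 i j = if i = σ j then 1 else 0 := by
  have := mul_pm_apply σ 1 i j
  simpa [Matrix.one_apply] using this

theorem pm_injective (n : ℕ) : Function.Injective (pm n) := by
  intro σ τ h
  ext j
  have h1 := pm_apply σ (σ j) j
  rw [h, pm_apply] at h1
  by_contra hne
  have : ¬ (σ j = τ j) := fun h => hne (by rw [h])
  simp [this] at h1

/-- Upper triangular subgroup. -/
noncomputable def U (n : ℕ) : Subgroup (G n) where
  carrier := {g | Matrix.BlockTriangular g.1 id}
  one_mem' := Matrix.blockTriangular_one
  mul_mem' ha hb := Matrix.BlockTriangular.mul ha hb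
  inv_mem' {x} hx := by
    have : Invertible x.1 := x.invertible
    have h := Matrix.blockTriangular_inv_of_blockTriangular (M := x.1) hx
    simpa using h

theorem mem_U {n : ℕ} {g : G n} : g ∈ U n ↔ ∀ i j : Fin n, j < i → g.1 i j = 0 := Iff.rfl

/-- Lower triangular subgroup. -/
noncomputable def Lo (n : ℕ) : Subgroup (G n) where
  carrier := {g | Matrix.BlockTriangular g.1 OrderDual.toDual}
  one_mem' := Matrix.blockTriangular_one
  mul_mem' ha hb := Matrix.BlockTriangular.mul ha hb
  inv_mem' {x} hx := by
    have : Invertible x.1 := x.invertible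
    have h := Matrix.blockTriangular_inv_of_blockTriangular (M := x.1) hx
    simpa using h

theorem mem_Lo {n : ℕ} {g : G n} : g ∈ Lo n ↔ ∀ i j : Fin n, i < j → g.1 i j = 0 := Iff.rfl

theorem U_diag {n : ℕ} {g : G n} (h : g ∈ U n) (i : Fin n) : g.1 i i = 1 := by
  have h1 : g.1.det = ∏ i, g.1 i i := Matrix.det_of_isUpperTriangular h
  have h2 : g.1.det ≠ 0 := ((Matrix.isUnit_iff_isUnit_det _).1 g.isUnit).ne_zero
  rw [h1, Finset.prod_ne_zero_iff] at h2
  exact z2_ne_zero (h2 i (Finset.mem_univ _))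

theorem Lo_diag {n : ℕ} {g : G n} (h : g ∈ Lo n) (i : Fin n) : g.1 i i = 1 := by
  have h1 : g.1.det = ∏ i, g.1 i i := Matrix.det_of_isLowerTriangular _ h
  have h2 : g.1.det ≠ 0 := ((Matrix.isUnit_iff_isUnit_det _).1 g.isUnit).ne_zero
  rw [h1, Finset.prod_ne_zero_iff] at h2
  exact z2_ne_zero (h2 i (Finset.mem_univ _))

theorem Lo_inf_U {n : ℕ} {g : G n} (h : g ∈ Lo n) (h' : g ∈ U n) : g = 1 := by
  apply Units.ext
  ext i j
  rcases lt_trichotomy i j with hij | hij | hij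
  · rw [mem_Lo.1 h i j hij]; simp [hij.ne]
  · subst hij; rw [U_diag h']; simp
  · rw [mem_U.1 h' i j hij]; simp [hij.ne']

theorem perm_eq_one {n : ℕ} (σ : Equiv.Perm (Fin n)) (h : ∀ i, i ≤ σ i) : σ = 1 := by
  have h1 : ∑ i, ((i : Fin n) : ℕ) = ∑ i, ((σ i : Fin n) : ℕ) :=
    (Equiv.sum_comp σ (fun i : Fin n => (i : ℕ))).symm
  rw [Finset.sum_eq_sum_iff_of_le (fun i _ => Fin.le_def.1 (h i))] at h1
  ext i
  simpa using (h1 i (Finset.mem_univ _)).symm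

theorem strictMono_perm {n : ℕ} (σ : Equiv.Perm (Fin n)) (h : StrictMono σ) : σ = 1 :=
  perm_eq_one σ (fun _ => h.le_apply)

theorem pm_mem_LU {n : ℕ} {σ : Equiv.Perm (Fin n)} {l u : G n} (hl : l ∈ Lo n) (hu : u ∈ U n)
    (h : pm n σ = l * u) : σ = 1 := by
  have h1 : l⁻¹ * pm n σ = u := by rw [h]; simp
  have : σ⁻¹ = 1 := by
    apply perm_eq_one
    intro i
    by_contra hlt
    have h2 := mem_U.1 hu i (σ⁻¹ i) (not_le.1 hlt)
    rw [← h1, mul_pm_apply] at h2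
    have h3 := Lo_diag ((Lo n).inv_mem hl) i
    simp at h2 h3
    rw [h2] at h3
    exact zero_ne_one h3
  simpa using this

/-- Row `i` of `g` has its first nonzero entry in column `c`. -/
def Lead {n : ℕ} (g : G n) (i c : Fin n) : Prop := g.1 i c = 1 ∧ ∀ k < c, g.1 i k = 0

def Pair {n : ℕ} (g : G n) (c : Fin n) : Prop := ∃ i j, i ≠ j ∧ Lead g i c ∧ Lead g j c

theorem exists_lead {n : ℕ} (g : G n) (i : Fin n) : ∃ c, Lead g i c := by
  have h : ∃ c, g.1 i c ≠ 0 := by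
    by_contra! h
    have h2 : g.1.det ≠ 0 := ((Matrix.isUnit_iff_isUnit_det _).1 g.isUnit).ne_zero
    exact h2 (Matrix.det_eq_zero_of_row_eq_zero i h)
  let s : Set (Fin n) := {c | g.1 i c ≠ 0}
  have hs : s.Nonempty := h
  refine ⟨WellFounded.min wellFounded_lt s hs, z2_ne_zero (WellFounded.min_mem wellFounded_lt s hs), ?_⟩
  intro k hk
  by_contra hne
  exact WellFounded.not_lt_min wellFounded_lt s hne hk

/-- Membership in `W B`. -/
def T {n : ℕ} (g : G n) : Prop := ∃ σ, pm n σ * g ∈ U n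

theorem exists_pair {n : ℕ} {g : G n} (h : ¬ T g) : ∃ c, Pair g c ∧ ∀ k < c, ¬ Pair g k := by
  have h0 : ∃ c, Pair g c := by
    by_contra! hno
    choose f hf using exists_lead g
    have hinj : Function.Injective f := by
      intro i j hij
      by_contra hne
      exact hno (f i) ⟨i, j, hne, hf i, hij ▸ hf j⟩
    apply h
    refine ⟨Equiv.ofBijective f (Finite.injective_iff_bijective.1 hinj), ?_⟩
    rw [mem_U]
    intro i j hij
    rw [pm_mul_apply]
    set k := (Equiv.ofBijective f (Finite.injective_iff_bijective.1 hinj))⁻¹ i with hk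
    have : f k = i := by
      have : Equiv.ofBijective f (Finite.injective_iff_bijective.1 hinj) k = i := by simp [hk]
      exact this
    exact (hf k).2 j (this ▸ hij)
  let s : Set (Fin n) := {c | Pair g c}
  have hs : s.Nonempty := h0
  exact ⟨WellFounded.min wellFounded_lt s hs, WellFounded.min_mem wellFounded_lt s hs,
    fun k hk hp => WellFounded.not_lt_min wellFounded_lt s hp hk⟩

theorem LU_col {n : ℕ} {l u : G n} (hl : l ∈ Lo n) (hu : u ∈ U n) (k : Fin n)
    (h : ∀ k' < k, ∀ j, k' < j → l.1 j k' = 0) (j : Fin n) (hj : k ≤ j) :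
    (∀ k' < k, (l * u).1 j k' = 0) ∧ (l * u).1 j k = l.1 j k := by
  constructor
  · intro k' hk'
    rw [Units.val_mul, Matrix.mul_apply]
    apply Finset.sum_eq_zero
    intro x _
    by_cases hx : x < k
    · rw [h x hx j (hx.trans_le hj), zero_mul]
    · rw [mem_U.1 hu x k' (hk'.trans_le (not_lt.1 hx)), mul_zero]
  · rw [Units.val_mul, Matrix.mul_apply, Finset.sum_eq_single k, U_diag hu, mul_one]
    · intro x _ hxk
      rcases lt_or_gt_of_ne hxk with hx | hx
      · rw [h x hx j (hx.trans_le hj), zero_mul]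
      · rw [mem_U.1 hu x k hx, mul_zero]
    · simp

theorem LU_cols {n : ℕ} {l u : G n} (hl : l ∈ Lo n) (hu : u ∈ U n) (c : Fin n)
    (hc : ∀ k < c, ¬ Pair (l * u) k) : ∀ k < c, ∀ j, k < j → l.1 j k = 0 := by
  intro k
  induction k using WellFoundedLT.induction with
  | ind k ih =>
  intro hk j hj
  have ih' : ∀ k' < k, ∀ j, k' < j → l.1 j k' = 0 := fun k' h => ih k' h (h.trans hk)
  by_contra hne
  have h1 := LU_col hl hu k ih' j hj.le
  have h2 := LU_col hl hu k ih' k le_rfl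
  apply hc k hk
  refine ⟨j, k, hj.ne', ⟨h1.2.trans (z2_ne_zero hne), h1.1⟩, ⟨h2.2.trans (Lo_diag hl k), h2.1⟩⟩

def LU {n : ℕ} (g : G n) : Prop := ∃ l ∈ Lo n, ∃ u ∈ U n, g = l * u

theorem LU_facts {n : ℕ} {g : G n} (hg : LU g) {c : Fin n} (hp : Pair g c)
    (hc : ∀ k < c, ¬ Pair g k) : Lead g c c ∧ ∃ m, c < m ∧ Lead g m c := by
  obtain ⟨l, hl, u, hu, rfl⟩ := hg
  have hcols := LU_cols hl hu c hc
  have h1 := LU_col hl hu c hcols c le_rfl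
  refine ⟨⟨h1.2.trans (Lo_diag hl c), h1.1⟩, ?_⟩
  have key : ∀ i, Lead (l * u) i c → c ≤ i := by
    intro i hi
    by_contra hlt
    have hlt := not_le.1 hlt
    have h2 := LU_col hl hu i (fun k' h => hcols k' (h.trans hlt)) i le_rfl
    have h3 := hi.2 i hlt
    rw [h2.2, Lo_diag hl] at h3
    exact one_ne_zero h3
  obtain ⟨i, j, hij, hi, hj⟩ := hp
  rcases (key i hi).lt_or_eq with h | h
  · exact ⟨i, h, hi⟩
  · exact ⟨j, lt_of_le_of_ne (key j hj) (h ▸ hij), hj⟩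

theorem LU_swap {n : ℕ} {g : G n} (hg : LU g) {c m : Fin n}
    (hc : ∀ k < c, ¬ Pair g k) (hcm : c < m) (hm : Lead g m c)
    (hmin : ∀ j, c < j → j < m → ¬ Lead g j c) : LU (pm n (Equiv.swap c m) * g) := by
  obtain ⟨l, hl, u, hu, rfl⟩ := hg
  have hcols := LU_cols hl hu c hc
  have hmc : l.1 m c = 1 := by
    rw [← (LU_col hl hu c hcols m hcm.le).2]; exact hm.1
  have hjc : ∀ j, c < j → j < m → l.1 j c = 0 := by
    intro j h1 h2
    have h3 := LU_col hl hu c hcols j h1.le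
    apply z2_ne_one
    intro h4
    exact hmin j h1 h2 ⟨h3.2.trans h4, h3.1⟩
  let x : Fin n → ZMod 2 := fun j => if c < j then l.1 m j else 0
  let E : Matrix (Fin n) (Fin n) (ZMod 2) := Matrix.of fun i j => if i = c then x j else 0
  have hXE : ∀ (X : Matrix (Fin n) (Fin n) (ZMod 2)) i j, (X * E) i j = X i c * x j := by
    intro X i j
    rw [Matrix.mul_apply, Finset.sum_eq_single c]
    · simp [E]
    · intro b _ hb; simp [E, hb]
    · simp
  have hEE : E * E = 0 := by
    ext i j
    rw [hXE]
    simp [E, x]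
  have hAA : (1 + E) * (1 + E) = 1 := by
    have : E + E = 0 := by ext i j; exact z2_add_self _
    rw [mul_add, add_mul, add_mul, hEE]
    simp [add_assoc, this]
  let A : G n := ⟨1 + E, 1 + E, hAA, hAA⟩
  have hA : A ∈ U n := by
    rw [mem_U]
    intro i j hij
    have : ¬ (i = c ∧ c < j) := by rintro ⟨rfl, h⟩; exact absurd h hij.asymm
    by_cases hi : i = c
    · have : ¬ c < j := fun h => this ⟨hi, h⟩
      simp [A, E, x, this, hij.ne']
    · simp [A, E, hi, hij.ne']
  have hA2 : A * A = 1 := Units.ext hAA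
  refine ⟨pm n (Equiv.swap c m) * l * A, ?_, A * u, (U n).mul_mem hA hu, ?_⟩
  swap
  · calc _ = pm n (Equiv.swap c m) * l * (A * A) * u := by rw [hA2]; group
      _ = _ := by group
  rw [mem_Lo]
  intro i j hij
  have hent : (pm n (Equiv.swap c m) * l * A).1 i j =
      l.1 (Equiv.swap c m i) j + l.1 (Equiv.swap c m i) c * x j := by
    rw [Units.val_mul]
    show ((pm n (Equiv.swap c m) * l).1 * (1 + E)) i j = _
    rw [mul_add, Matrix.add_apply, hXE, mul_one, pm_mul_apply, pm_mul_apply]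
    simp
  rw [hent]
  by_cases hic : i = c
  · subst hic
    simp [x, hij, hmc, z2_add_self]
  by_cases him : i = m
  · subst him
    rw [Equiv.swap_apply_right, Lo_diag hl, mem_Lo.1 hl c j (hcm.trans hij)]
    simp [x, mem_Lo.1 hl i j hij]
  rw [Equiv.swap_apply_of_ne_of_ne hic him, mem_Lo.1 hl i j hij, zero_add]
  rcases lt_or_gt_of_ne hic with h | h
  · rw [mem_Lo.1 hl i c h, zero_mul]
  · rcases lt_or_gt_of_ne him with h' | h'
    · rw [hjc i h h', zero_mul]
    · simp [x, mem_Lo.1 hl m j (h'.trans hij)]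

theorem count {n : ℕ} (g : G n) :
    (∑ σ : Equiv.Perm (Fin n), if LU (pm n σ * g) then (1 : ZMod 2) else 0)
      = if T g then 1 else 0 := by
  by_cases hT : T g
  · rw [if_pos hT]
    obtain ⟨σ₀, h0⟩ := hT
    rw [Finset.sum_eq_single σ₀, if_pos]
    · exact ⟨1, (Lo n).one_mem, _, h0, by simp⟩
    · intro σ _ hne
      rw [if_neg]
      rintro ⟨l, hl, u, hu, h⟩
      apply hne
      have : σ * σ₀⁻¹ = 1 := by
        refine pm_mem_LU hl ((U n).mul_mem hu ((U n).inv_mem h0)) ?_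
        rw [← mul_assoc, ← h]
        simp
      exact mul_inv_eq_one.1 this
    · simp
  · rw [if_neg hT]
    obtain ⟨c, hp, hc⟩ := exists_pair hT
    have hlead : ∀ (σ : Equiv.Perm (Fin n)) (g : G n) i k, Lead (pm n σ * g) i k ↔ Lead g (σ⁻¹ i) k := by
      intro σ g i k
      simp only [Lead, pm_mul_apply]
    have hpair : ∀ (σ : Equiv.Perm (Fin n)) k, Pair (pm n σ * g) k ↔ Pair g k := by
      intro σ k
      simp only [Pair, hlead]
      constructor
      · rintro ⟨i, j, hij, h1, h2⟩
        exact ⟨_, _, fun h => hij ((σ⁻¹).injective h), h1, h2⟩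
      · rintro ⟨i, j, hij, h1, h2⟩
        exact ⟨σ i, σ j, fun h => hij (σ.injective h), by simpa using h1, by simpa using h2⟩
    -- the canonical choice of the second row
    have hch : ∀ p : Fin n → Prop, ∃ m, (∃ j, c < j ∧ p j) →
        c < m ∧ p m ∧ ∀ j, c < j → j < m → ¬ p j := by
      intro p
      by_cases h : ∃ j, c < j ∧ p j
      · let s : Set (Fin n) := {j | c < j ∧ p j}
        have hs : s.Nonempty := h
        have h1 := WellFounded.min_mem wellFounded_lt s hs
        exact ⟨WellFounded.min wellFounded_lt s hs, fun _ => ⟨h1.1, h1.2, fun j hj hlt hpj =>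
          WellFounded.not_lt_min wellFounded_lt s ⟨hj, hpj⟩ hlt⟩⟩
      · exact ⟨c, fun h' => absurd h' h⟩
    choose mf hmf using hch
    let M : Equiv.Perm (Fin n) → Fin n := fun σ => mf (fun j => Lead (pm n σ * g) j c)
    have hM : ∀ σ, LU (pm n σ * g) → c < M σ ∧ Lead (pm n σ * g) (M σ) c ∧
        LU (pm n (Equiv.swap c (M σ) * σ) * g) ∧ M (Equiv.swap c (M σ) * σ) = M σ := by
      intro σ hσ
      have hc' : ∀ k < c, ¬ Pair (pm n σ * g) k := fun k hk h => hc k hk ((hpair σ k).1 h)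
      obtain ⟨h1, h2⟩ := LU_facts hσ ((hpair σ c).2 hp) hc'
      obtain ⟨h3, h4, h5⟩ := hmf (fun j => Lead (pm n σ * g) j c) h2
      refine ⟨h3, h4, ?_, ?_⟩
      · rw [map_mul, mul_assoc]
        exact LU_swap hσ hc' h3 h4 h5
      · show mf _ = mf _
        congr 1
        funext j
        rw [map_mul, mul_assoc, hlead, Equiv.swap_inv]
        by_cases hj : j = c
        · subst hj
          rw [Equiv.swap_apply_left]
          exact propext ⟨fun _ => h1, fun _ => h4⟩
        by_cases hj' : j = M σ
        · rw [hj', Equiv.swap_apply_right]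
          exact propext ⟨fun _ => h4, fun _ => h1⟩
        rw [Equiv.swap_apply_of_ne_of_ne hj hj']
    rw [← Finset.sum_filter]
    refine Finset.sum_involution (fun σ _ => Equiv.swap c (M σ) * σ) ?_ ?_ ?_ ?_
    · intro σ _; exact z2_add_self 1
    · intro σ hσ _ h
      have hσ := hM σ (Finset.mem_filter.1 hσ).2
      have h' : Equiv.swap c (M σ) = 1 := by simpa using h
      rw [Equiv.Perm.one_def, Equiv.swap_eq_refl_iff] at h'
      exact hσ.1.ne h'
    · intro σ hσ
      exact Finset.mem_filter.2 ⟨Finset.mem_univ _, (hM σ (Finset.mem_filter.1 hσ).2).2.2.1⟩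
    · intro σ hσ
      have hσ := hM σ (Finset.mem_filter.1 hσ).2
      rw [hσ.2.2.2, ← mul_assoc, Equiv.swap_mul_self, one_mul]

/-- Group-like elements of the group algebra. -/
noncomputable abbrev o {n : ℕ} (g : G n) : MonoidAlgebra (ZMod 2) (G n) :=
  MonoidAlgebra.of (ZMod 2) (G n) g

theorem alg_add_self {n : ℕ} (x : MonoidAlgebra (ZMod 2) (G n)) : x + x = 0 := by
  rw [← two_smul (ZMod 2) x, show (2 : ZMod 2) = 0 from rfl, zero_smul]

theorem SigmaBar_eq (n : ℕ) : SigmaBar n = ∑ σ : Equiv.Perm (Fin n), o (pm n σ) := by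
  unfold SigmaBar
  rw [← Finset.sum_filter]
  symm
  refine Finset.sum_bij (fun σ _ => pm n σ) ?_ ?_ ?_ ?_
  · intro σ _
    exact Finset.mem_filter.2 ⟨Finset.mem_univ _, σ⁻¹, rfl⟩
  · intro σ _ τ _ h
    exact pm_injective n h
  · intro g hg
    obtain ⟨σ, hσ⟩ := (Finset.mem_filter.1 hg).2
    refine ⟨σ⁻¹, Finset.mem_univ _, Units.ext ?_⟩
    rw [hσ]
    simp [pm]
  · intro σ _
    rfl

theorem BBar_eq (n : ℕ) : BBar n = ∑ b : U n, o (b : G n) := by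
  unfold BBar
  rw [← Finset.sum_filter]
  symm
  refine Finset.sum_bij (fun b _ => (b : G n)) ?_ ?_ ?_ ?_
  · intro b _
    exact Finset.mem_filter.2 ⟨Finset.mem_univ _, b.2⟩
  · intro σ _ τ _ h
    exact Subtype.ext h
  · intro g hg
    exact ⟨⟨g, (Finset.mem_filter.1 hg).2⟩, Finset.mem_univ _, rfl⟩
  · intro σ _
    rfl

theorem o_mul_BBar {n : ℕ} {t : G n} (ht : t ∈ U n) : o t * BBar n = BBar n := by
  rw [BBar_eq, Finset.mul_sum]
  simp only [← map_mul]
  exact Equiv.sum_comp (Equiv.mulLeft (⟨t, ht⟩ : U n)) (fun b : U n => o (b : G n))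

theorem SigmaBar_mul_pm {n : ℕ} (τ : Equiv.Perm (Fin n)) : SigmaBar n * o (pm n τ) = SigmaBar n := by
  rw [SigmaBar_eq, Finset.sum_mul]
  simp only [← map_mul]
  exact Equiv.sum_comp (Equiv.mulRight τ) (fun σ => o (pm n σ))

theorem B_pm_B_zero {n : ℕ} {τ : Equiv.Perm (Fin n)} (hτ : τ ≠ Fin.revPerm) :
    BBar n * o (pm n τ) * BBar n = 0 := by
  have hex : ∃ i j, i < j ∧ τ i < τ j := by
    by_contra! h
    apply hτ
    have h1 : τ * Fin.revPerm = 1 := by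
      apply strictMono_perm
      intro i j hij
      have h2 : Fin.rev j < Fin.rev i := Fin.rev_lt_rev.2 hij
      exact lt_of_le_of_ne (h _ _ h2) (fun h3 => hij.ne (Fin.rev_injective (τ.injective h3)))
    have h2 : (Fin.revPerm : Equiv.Perm (Fin n)) * Fin.revPerm = 1 := by
      ext i; simp
    calc τ = τ * (Fin.revPerm * Fin.revPerm) := by rw [h2, mul_one]
      _ = Fin.revPerm := by rw [← mul_assoc, h1, one_mul]
  obtain ⟨i, j, hij, hτij⟩ := hex
  let E : Matrix (Fin n) (Fin n) (ZMod 2) := Matrix.transvection i j 1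
  have hEE : E * E = 1 := by
    simp only [E]
    rw [Matrix.transvection_mul_transvection_same _ _ hij.ne, z2_add_self, Matrix.transvection_zero]
  let t' : G n := ⟨E, E, hEE, hEE⟩
  have ht'e : ∀ a b, t'.1 a b = (if a = b then 1 else 0) + (if i = a ∧ j = b then 1 else 0) := by
    intro a b
    simp [t', E, Matrix.transvection, Matrix.one_apply, Matrix.single_apply]
  have ht' : t' ∈ U n := by
    rw [mem_U]
    intro a b hab
    rw [ht'e, if_neg hab.ne', if_neg, add_zero]
    rintro ⟨rfl, rfl⟩
    exact hab.asymm hij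
  have ht'2 : t' * t' = 1 := Units.ext hEE
  have ht'1 : t' ≠ 1 := by
    intro h
    have h1 := ht'e i j
    rw [h] at h1
    simp [hij.ne] at h1
  let t : G n := pm n τ * t' * pm n τ⁻¹
  have ht : t ∈ U n := by
    rw [mem_U]
    intro a b hab
    simp only [t]
    rw [mul_pm_apply, pm_mul_apply, ht'e, if_neg, if_neg, add_zero]
    · rintro ⟨rfl, h⟩
      rw [h] at hij hτij
      simp at hτij
      exact hab.asymm hτij
    · intro h
      exact hab.ne' ((τ⁻¹).injective h)
  have htp : t * pm n τ = pm n τ * t' := by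
    simp [t]
  have ht2 : t * t = 1 := by
    calc t * t = t * pm n τ * t' * pm n τ⁻¹ := by simp only [t, mul_assoc]
      _ = pm n τ * (t' * t') * pm n τ⁻¹ := by rw [htp]; simp only [mul_assoc]
      _ = 1 := by rw [ht'2]; simp
  have ht1 : t ≠ 1 := by
    intro h
    rw [h, one_mul] at htp
    exact ht'1 (by simpa using htp.symm)
  rw [show BBar n * o (pm n τ) * BBar n = ∑ b : U n, o (b : G n) * o (pm n τ) * BBar n by
    rw [← Finset.sum_mul, ← Finset.sum_mul, ← BBar_eq]]
  refine Finset.sum_involution (fun b _ => b * ⟨t, ht⟩) ?_ ?_ ?_ ?_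
  · intro b _
    have : o ((b * ⟨t, ht⟩ : U n) : G n) * o (pm n τ) * BBar n
        = o (b : G n) * o (pm n τ) * BBar n := by
      rw [← map_mul, Subgroup.coe_mul, mul_assoc, htp, ← mul_assoc, map_mul, mul_assoc,
        o_mul_BBar ht', map_mul]
    rw [this, alg_add_self]
  · intro b _ _ h
    apply ht1
    have : (⟨t, ht⟩ : U n) = 1 := by simpa using h
    exact congrArg Subtype.val this
  · intro b _
    exact Finset.mem_univ _
  · intro b _
    rw [mul_assoc]
    have : (⟨t, ht⟩ : U n) * ⟨t, ht⟩ = 1 := Subtype.ext ht2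
    rw [this, mul_one]

theorem Steinberg_eq (n : ℕ) : SteinbergElement n = ∑ g : G n, if T g then o g else 0 := by
  unfold SteinbergElement
  rw [SigmaBar_eq, BBar_eq, Finset.sum_mul_sum, ← Finset.sum_product', ← Finset.sum_filter]
  refine Finset.sum_bij (fun p _ => pm n p.1 * (p.2 : G n)) ?_ ?_ ?_ ?_
  · rintro ⟨σ, b⟩ _
    refine Finset.mem_filter.2 ⟨Finset.mem_univ _, σ⁻¹, ?_⟩
    simp
  · rintro ⟨σ, b⟩ _ ⟨τ, c⟩ _ h
    have h : pm n σ * (b : G n) = pm n τ * (c : G n) := h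
    have h1 : pm n (τ⁻¹ * σ) = 1 * ((c : G n) * (b : G n)⁻¹) := by
      rw [map_mul, map_inv, one_mul, eq_mul_inv_iff_mul_eq, mul_assoc, h]
      simp
    have h2 := pm_mem_LU (Lo n).one_mem ((U n).mul_mem c.2 ((U n).inv_mem b.2)) h1
    have h3 : τ = σ := inv_mul_eq_one.1 h2
    subst h3
    have h4 : b = c := Subtype.ext (mul_left_cancel h)
    rw [h4]
  · intro g hg
    obtain ⟨σ, hσ⟩ := (Finset.mem_filter.1 hg).2
    exact ⟨(σ⁻¹, ⟨_, hσ⟩), Finset.mem_univ _, by simp⟩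
  · intro p _
    simp [o]

theorem rev_conj {n : ℕ} (g : G n) (i j : Fin n) :
    (pm n Fin.revPerm * g * pm n Fin.revPerm).1 i j = g.1 (Fin.rev i) (Fin.rev j) := by
  rw [mul_pm_apply, pm_mul_apply]
  rfl

theorem pm_rev_sq (n : ℕ) : pm n Fin.revPerm * pm n Fin.revPerm = 1 := by
  rw [← map_mul]
  have h2 : (Fin.revPerm : Equiv.Perm (Fin n)) * Fin.revPerm = 1 := by
    ext i; simp
  rw [h2, map_one]

theorem LoBar_eq (n : ℕ) : o (pm n Fin.revPerm) * BBar n * o (pm n Fin.revPerm)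
    = ∑ l : Lo n, o (l : G n) := by
  rw [BBar_eq, Finset.mul_sum, Finset.sum_mul]
  refine Finset.sum_bij (fun b _ => ⟨pm n Fin.revPerm * (b : G n) * pm n Fin.revPerm, ?_⟩)
    ?_ ?_ ?_ ?_
  · rw [mem_Lo]
    intro i j hij
    rw [rev_conj]
    exact mem_U.1 b.2 _ _ (Fin.rev_lt_rev.2 hij)
  · intro b _
    exact Finset.mem_univ _
  · intro b _ c _ h
    have h := congrArg Subtype.val h
    exact Subtype.ext (mul_left_cancel (mul_right_cancel h))
  · intro l _
    refine ⟨⟨pm n Fin.revPerm * (l : G n) * pm n Fin.revPerm, ?_⟩, Finset.mem_univ _, ?_⟩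
    · rw [mem_U]
      intro i j hij
      rw [rev_conj]
      exact mem_Lo.1 l.2 _ _ (Fin.rev_lt_rev.2 hij)
    · apply Subtype.ext
      show pm n Fin.revPerm * (pm n Fin.revPerm * (l : G n) * pm n Fin.revPerm) * pm n Fin.revPerm
        = (l : G n)
      rw [mul_assoc, mul_assoc, mul_assoc, pm_rev_sq, mul_one, ← mul_assoc, pm_rev_sq, one_mul]
  · intro b _
    simp only [o, map_mul]

theorem LoB_eq (n : ℕ) : (∑ l : Lo n, o (l : G n)) * BBar n
    = ∑ g : G n, if LU g then o g else 0 := by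
  rw [BBar_eq, Finset.sum_mul_sum, ← Finset.sum_product', ← Finset.sum_filter]
  refine Finset.sum_bij (fun p _ => (p.1 : G n) * (p.2 : G n)) ?_ ?_ ?_ ?_
  · rintro ⟨l, b⟩ _
    exact Finset.mem_filter.2 ⟨Finset.mem_univ _, l, l.2, b, b.2, rfl⟩
  · rintro ⟨l, b⟩ _ ⟨l', b'⟩ _ h
    have h : (l : G n) * (b : G n) = l' * b' := h
    have h1 : (l' : G n)⁻¹ * l = b' * (b : G n)⁻¹ := by
      rw [eq_mul_inv_iff_mul_eq, mul_assoc, h]; simp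
    have h2 : (l' : G n)⁻¹ * l = 1 := Lo_inf_U ((Lo n).mul_mem ((Lo n).inv_mem l'.2) l.2)
      (h1 ▸ (U n).mul_mem b'.2 ((U n).inv_mem b.2))
    have h3 : l' = l := Subtype.ext (inv_mul_eq_one.1 h2)
    subst h3
    have h4 : b = b' := Subtype.ext (mul_left_cancel h)
    rw [h4]
  · intro g hg
    obtain ⟨l, hl, u, hu, h⟩ := (Finset.mem_filter.1 hg).2
    exact ⟨(⟨l, hl⟩, ⟨u, hu⟩), Finset.mem_univ _, h.symm⟩
  · intro p _
    simp [o]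

theorem Steinberg_idem (n : ℕ) :
    SteinbergElement n * SteinbergElement n = SteinbergElement n := by
  have h1 : BBar n * (SigmaBar n * BBar n)
      = BBar n * o (pm n Fin.revPerm) * BBar n := by
    rw [← mul_assoc]
    conv_lhs => rw [SigmaBar_eq, Finset.mul_sum, Finset.sum_mul]
    rw [Finset.sum_eq_single Fin.revPerm]
    · intro τ _ hτ
      exact B_pm_B_zero hτ
    · simp
  have h2 : SteinbergElement n * SteinbergElement n
      = SigmaBar n * ∑ g : G n, if LU g then o g else 0 := by
    rw [← LoB_eq, ← LoBar_eq]
    unfold SteinbergElement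
    rw [mul_assoc, h1]
    conv_lhs => rw [← SigmaBar_mul_pm Fin.revPerm]
    simp only [mul_assoc]
  rw [h2, Steinberg_eq, SigmaBar_eq, Finset.sum_mul]
  have h3 : ∀ σ : Equiv.Perm (Fin n), (o (pm n σ) * ∑ g : G n, if LU g then o g else 0)
      = ∑ g : G n, (if LU (pm n σ⁻¹ * g) then (1 : ZMod 2) else 0) • o g := by
    intro σ
    rw [Finset.mul_sum]
    rw [← Equiv.sum_comp (Equiv.mulLeft (pm n σ))
      (fun g => (if LU (pm n σ⁻¹ * g) then (1 : ZMod 2) else 0) • o g)]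
    apply Finset.sum_congr rfl
    intro g _
    simp only [Equiv.coe_mulLeft, ← mul_assoc, ← map_mul, inv_mul_cancel, map_one, one_mul]
    split_ifs
    · rw [one_smul]; exact (map_mul _ _ _).symm
    · rw [mul_zero, zero_smul]
  simp only [h3]
  rw [Finset.sum_comm]
  apply Finset.sum_congr rfl
  intro g _
  have h4 := Equiv.sum_comp (Equiv.inv (Equiv.Perm (Fin n)))
      (fun σ => if LU (pm n σ * g) then (1 : ZMod 2) else 0)
  simp only [Equiv.inv_apply] at h4
  rw [← Finset.sum_smul, h4, count]
  split_ifs <;> simp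

/-- Extension of a permutation fixing the last point. -/
def ext {m : ℕ} : Equiv.Perm (Fin m) →* Equiv.Perm (Fin (m + 1)) where
  toFun τ :=
    { toFun := Fin.lastCases (Fin.last m) (fun i => (τ i).castSucc)
      invFun := Fin.lastCases (Fin.last m) (fun i => (τ⁻¹ i).castSucc)
      left_inv := by
        intro i
        induction i using Fin.lastCases <;> simp
      right_inv := by
        intro i
        induction i using Fin.lastCases <;> simp }
  map_one' := by
    apply Equiv.ext
    intro i
    induction i using Fin.lastCases <;> simp
  map_mul' σ τ := by
    apply Equiv.ext
    intro i
    induction i using Fin.lastCases <;> simp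

theorem ext_castSucc {m : ℕ} (τ : Equiv.Perm (Fin m)) (i : Fin m) :
    ext τ i.castSucc = (τ i).castSucc := by
  simp [ext]

theorem ext_last {m : ℕ} (τ : Equiv.Perm (Fin m)) :
    ext τ (Fin.last m) = Fin.last m := by
  simp [ext]

/-- The block embedding. -/
noncomputable def phi (m : ℕ) (hn : 2 ≤ m + 1) : G m →* G (m + 1) := glEmbed (m + 1) hn

theorem phi_eq {m : ℕ} (hn : 2 ≤ m + 1) (g : G m) (x y : Fin m ⊕ Fin 1) :
    (phi m hn g).1 (finSumFinEquiv x) (finSumFinEquiv y) = Matrix.fromBlocks g.1 0 0 1 x y := by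
  have : (phi m hn g).1 = Matrix.reindex (finSumFinEquiv (m := m) (n := 1))
      (finSumFinEquiv (m := m) (n := 1)) (Matrix.fromBlocks g.1 0 0 1) := rfl
  rw [this, Matrix.reindex_apply, Matrix.submatrix_apply, Equiv.symm_apply_apply,
    Equiv.symm_apply_apply]

theorem fs_inl {m : ℕ} (a : Fin m) : finSumFinEquiv (n := 1) (Sum.inl a) = a.castSucc := rfl

theorem fs_inr {m : ℕ} : finSumFinEquiv (m := m) (n := 1) (Sum.inr 0) = Fin.last m := rfl

theorem phi_cc {m : ℕ} (hn : 2 ≤ m + 1) (g : G m) (a b : Fin m) :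
    (phi m hn g).1 a.castSucc b.castSucc = g.1 a b := by
  rw [← fs_inl, ← fs_inl, phi_eq]; rfl

theorem phi_cl {m : ℕ} (hn : 2 ≤ m + 1) (g : G m) (a : Fin m) :
    (phi m hn g).1 a.castSucc (Fin.last m) = 0 := by
  rw [← fs_inl, ← fs_inr, phi_eq]; rfl

theorem phi_lc {m : ℕ} (hn : 2 ≤ m + 1) (g : G m) (a : Fin m) :
    (phi m hn g).1 (Fin.last m) a.castSucc = 0 := by
  rw [← fs_inl, ← fs_inr, phi_eq]; rfl

theorem phi_ll {m : ℕ} (hn : 2 ≤ m + 1) (g : G m) :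
    (phi m hn g).1 (Fin.last m) (Fin.last m) = 1 := by
  rw [← fs_inr, phi_eq]; rfl

theorem phi_injective {m : ℕ} (hn : 2 ≤ m + 1) : Function.Injective (phi m hn) := by
  intro g h hgh
  apply Units.ext
  ext a b
  rw [← phi_cc hn, ← phi_cc hn, hgh]

theorem phi_pm {m : ℕ} (hn : 2 ≤ m + 1) (τ : Equiv.Perm (Fin m)) :
    phi m hn (pm m τ) = pm (m + 1) (ext τ) := by
  apply Units.ext
  ext i j
  rw [pm_apply]
  induction i using Fin.lastCases with
  | last =>
    induction j using Fin.lastCases with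
    | last => rw [phi_ll, ext_last, if_pos rfl]
    | cast b =>
      rw [phi_lc, ext_castSucc, if_neg]
      exact (Fin.castSucc_lt_last _).ne'
  | cast a =>
    induction j using Fin.lastCases with
    | last =>
      rw [phi_cl, ext_last, if_neg]
      exact (Fin.castSucc_lt_last _).ne
    | cast b =>
      rw [phi_cc, ext_castSucc, pm_apply]
      simp

/-- Minimal coset representatives. -/
def R (m : ℕ) : Set (Equiv.Perm (Fin (m + 1))) := {ρ | StrictMono fun i : Fin m => ρ⁻¹ i.castSucc}

theorem sum_perm (m : ℕ) : SigmaBar (m + 1)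
    = (∑ τ : Equiv.Perm (Fin m), o (pm (m + 1) (ext τ))) * ∑ ρ : R m, o (pm (m + 1) ρ) := by
  rw [SigmaBar_eq, Finset.sum_mul_sum, ← Finset.sum_product']
  symm
  refine Finset.sum_bij (fun p _ => ext p.1 * (p.2 : Equiv.Perm (Fin (m + 1)))) ?_ ?_ ?_ ?_
  · intro p _
    exact Finset.mem_univ _
  · rintro ⟨τ, ρ⟩ _ ⟨τ', ρ'⟩ _ h
    have h : ext τ * (ρ : Equiv.Perm (Fin (m + 1))) = ext τ' * ρ' := h
    have h1 : (ρ' : Equiv.Perm (Fin (m + 1)))⁻¹ = (ρ : Equiv.Perm (Fin (m + 1)))⁻¹ * ext (τ⁻¹ * τ') := by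
      have h0 : (ρ' : Equiv.Perm (Fin (m + 1))) = (ext τ')⁻¹ * (ext τ * ρ) := by rw [h]; simp
      rw [h0, map_mul, map_inv]
      group
    have h2 : τ⁻¹ * τ' = 1 := by
      apply strictMono_perm
      intro i j hij
      have h3 : StrictMono fun i : Fin m => (ρ : Equiv.Perm (Fin (m + 1)))⁻¹ i.castSucc := ρ.2
      have h4 : StrictMono fun i : Fin m => (ρ' : Equiv.Perm (Fin (m + 1)))⁻¹ i.castSucc := ρ'.2
      have h5 := h4 hij
      simp only [h1, Equiv.Perm.coe_mul, Function.comp_apply, ext_castSucc] at h5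
      exact h3.lt_iff_lt.1 h5
    have h3 : τ = τ' := inv_mul_eq_one.1 h2
    subst h3
    have h4 : ρ = ρ' := Subtype.ext (mul_left_cancel h)
    rw [h4]
  · intro σ _
    let f : Fin m → Fin (m + 1) := fun i => σ⁻¹ i.castSucc
    have hf : Function.Injective f := (σ⁻¹).injective.comp (Fin.castSucc_injective m)
    have hs : StrictMono (f ∘ Tuple.sort f) :=
      (Tuple.monotone_sort f).strictMono_of_injective (hf.comp (Tuple.sort f).injective)
    refine ⟨(Tuple.sort f, ⟨(ext (Tuple.sort f))⁻¹ * σ, ?_⟩), Finset.mem_univ _, by simp⟩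
    intro i j hij
    have := hs hij
    simpa only [mul_inv_rev, inv_inv, Equiv.Perm.coe_mul, Function.comp_apply, ext_castSucc] using this
  · intro p _
    simp only [o, map_mul]

theorem exists_factor {n : ℕ} {K : Type} [Group K] [Fintype K] (ψ : K →* G n)
    (hψ : Function.Injective ψ) (S : Set (G n)) (hS : ∀ k, ∀ s ∈ S, ψ k * s ∈ S) :
    ∃ Y, (∑ s : S, o (s : G n)) = (∑ k, o (ψ k)) * Y := by
  obtain ⟨Q, hQ, -⟩ := ψ.range.exists_isComplement_right 1
  refine ⟨∑ r : (Q ∩ S : Set (G n)), o (r : G n), ?_⟩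
  rw [Finset.sum_mul_sum, ← Finset.sum_product']
  symm
  refine Finset.sum_bij (fun p _ => ⟨ψ p.1 * (p.2 : G n), hS _ _ p.2.2.2⟩) ?_ ?_ ?_ ?_
  · intro p _
    exact Finset.mem_univ _
  · rintro ⟨k, r⟩ _ ⟨k', r'⟩ _ h
    have h : ψ k * (r : G n) = ψ k' * r' := congrArg Subtype.val h
    have hinj := hQ.1
    have h1 := @hinj (⟨ψ k, k, rfl⟩, ⟨r, r.2.1⟩) (⟨ψ k', k', rfl⟩, ⟨r', r'.2.1⟩) h
    rw [Prod.mk.injEq] at h1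
    have h2 : k = k' := hψ (congrArg Subtype.val h1.1)
    have h3 : r = r' := Subtype.ext (congrArg (fun x : Q => (x : G n)) h1.2)
    rw [h2, h3]
  · rintro ⟨s, hs⟩ _
    obtain ⟨⟨⟨_, k, rfl⟩, ⟨r, hr⟩⟩, h⟩ := hQ.2 s
    have h : ψ k * r = s := h
    refine ⟨(k, ⟨r, hr, ?_⟩), Finset.mem_univ _, Subtype.ext h⟩
    have : r = ψ k⁻¹ * s := by rw [← h]; simp
    rw [this]
    exact hS _ _ hs
  · intro p _
    simp only [o, map_mul]

theorem conj_mem {m : ℕ} (hn : 2 ≤ m + 1) {ρ : Equiv.Perm (Fin (m + 1))} (hρ : ρ ∈ R m)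
    {h : G m} (hh : h ∈ U m) : pm (m + 1) ρ⁻¹ * phi m hn h * pm (m + 1) ρ ∈ U (m + 1) := by
  have hρ : StrictMono fun i : Fin m => ρ⁻¹ i.castSucc := hρ
  rw [mem_U]
  intro i j hij
  rw [mul_pm_apply, pm_mul_apply, inv_inv]
  obtain ⟨i, rfl⟩ := (ρ⁻¹).surjective i
  obtain ⟨j, rfl⟩ := (ρ⁻¹).surjective j
  have hr : ∀ x, ρ (ρ⁻¹ x) = x := fun x => by simp
  rw [hr, hr]
  induction i using Fin.lastCases with
  | last =>
    induction j using Fin.lastCases with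
    | last => exact absurd hij (lt_irrefl _)
    | cast b => exact phi_lc hn h b
  | cast a =>
    induction j using Fin.lastCases with
    | last => exact phi_cl hn h a
    | cast b =>
      rw [phi_cc]
      exact mem_U.1 hh a b (hρ.lt_iff_lt.1 hij)

theorem factor_rho {m : ℕ} (hn : 2 ≤ m + 1) (ρ : R m) : ∃ Y, o (pm (m + 1) ρ) * BBar (m + 1)
    = (∑ k : U m, o (phi m hn k)) * Y := by
  obtain ⟨Y, hY⟩ := exists_factor ((phi m hn).comp (U m).subtype)
    ((phi_injective hn).comp (Subtype.val_injective))
    {g | pm (m + 1) (ρ : Equiv.Perm (Fin (m + 1)))⁻¹ * g ∈ U (m + 1)} (by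
      intro k s hs
      have h1 := (U (m + 1)).mul_mem (conj_mem hn ρ.2 k.2) hs
      simpa [mul_assoc] using h1)
  refine ⟨Y, Eq.trans ?_ hY⟩
  rw [BBar_eq, Finset.mul_sum]
  refine Finset.sum_bij (fun b _ => ⟨pm (m + 1) ρ * (b : G (m + 1)), ?_⟩) ?_ ?_ ?_ ?_
  · simp
  · intro b _
    exact Finset.mem_univ _
  · intro b _ c _ h
    exact Subtype.ext (mul_left_cancel (congrArg Subtype.val h))
  · rintro ⟨g, hg⟩ _
    refine ⟨⟨_, hg⟩, Finset.mem_univ _, Subtype.ext ?_⟩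
    simp
  · intro b _
    simp only [o, map_mul]

theorem absorb {m : ℕ} (hn : 2 ≤ m + 1) :
    MonoidAlgebra.mapDomainAlgHom (ZMod 2) (ZMod 2) (phi m hn)
        (SteinbergElement m) * SteinbergElement (m + 1) = SteinbergElement (m + 1) := by
  set F := MonoidAlgebra.mapDomainAlgHom (ZMod 2) (ZMod 2) (phi m hn) with hF
  have hFo : ∀ g, F (o g) = o (phi m hn g) := by
    intro g
    simp [hF, o, MonoidAlgebra.of_apply, MonoidAlgebra.mapDomain_single]
  choose Y hY using factor_rho hn
  have h1 : SteinbergElement (m + 1) = F (SteinbergElement m) * ∑ ρ, Y ρ := by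
    unfold SteinbergElement
    rw [map_mul, SigmaBar_eq m, BBar_eq m, map_sum, map_sum, sum_perm]
    simp only [hFo, phi_pm]
    have h2 : (∑ ρ : R m, o (pm (m + 1) ρ)) * BBar (m + 1)
        = (∑ k : U m, o (phi m hn k)) * ∑ ρ, Y ρ := by
      rw [Finset.sum_mul, Finset.mul_sum]
      exact Finset.sum_congr rfl (fun ρ _ => hY ρ)
    rw [mul_assoc, h2, mul_assoc]
  rw [h1, ← mul_assoc, ← map_mul, Steinberg_idem]

end SteinbergAux

/-- The absorption identity `φ(e_{n-1}) * e_n = e_n`, where `φ` is the algebra map of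
group algebras induced by the block-diagonal embedding `g ↦ g ⊕ 1`. -/
theorem steinberg_absorption (n : ℕ) (hn : 2 ≤ n) :
    MonoidAlgebra.mapDomainAlgHom (ZMod 2) (ZMod 2) (glEmbed n hn)
        (SteinbergElement (n - 1)) * SteinbergElement n = SteinbergElement n := by
  obtain ⟨m, rfl⟩ : ∃ m, n = m + 1 := ⟨n - 1, by omega⟩
  exact SteinbergAux.absorb hn
end

section
/- The polynomials w₂ = x₁² + x₁x₂ + x₂² and w₃ = x₁²x₂ + x₁x₂² in (ℤ/2)[x₁, x₂] are algebraically independent over ℤ/2: the ℤ/2-algebra homomorphism from the polynomial ring in two indeterminates (ℤ/2)[u, v] to (ℤ/2)[x₁, x₂] sending u ↦ w₂ and v ↦ w₃ is injective. -/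
open MvPolynomial

/-- The Dickson invariant `w₂ = x₁² + x₁x₂ + x₂²` in `(ℤ/2)[x₁, x₂]`. -/
noncomputable def w2 : MvPolynomial (Fin 2) (ZMod 2) :=
  X 0 ^ 2 + X 0 * X 1 + X 1 ^ 2

/-- The Dickson invariant `w₃ = x₁²x₂ + x₁x₂²` in `(ℤ/2)[x₁, x₂]`. -/
noncomputable def w3 : MvPolynomial (Fin 2) (ZMod 2) :=
  X 0 ^ 2 * X 1 + X 0 * X 1 ^ 2

lemma dickson_root (i : Fin 2) :
    (X i : MvPolynomial (Fin 2) (ZMod 2)) ^ 3 + w2 * X i + w3 = 0 := by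
  have h2 : (2 : MvPolynomial (Fin 2) (ZMod 2)) = 0 := CharTwo.two_eq_zero
  fin_cases i
  · simp only [w2, w3, Fin.zero_eta]
    linear_combination (X 0 ^ 3 + X 0 ^ 2 * X 1 + X 0 * X 1 ^ 2) * h2
  · simp only [w2, w3, Fin.mk_one]
    linear_combination (X 1 ^ 3 + X 0 ^ 2 * X 1 + X 0 * X 1 ^ 2) * h2

lemma dickson_isIntegral (p : MvPolynomial (Fin 2) (ZMod 2)) :
    IsIntegral (Algebra.adjoin (ZMod 2) (Set.range ![w2, w3])) p := by
  induction p using MvPolynomial.induction_on with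
  | C a =>
    exact isIntegral_algebraMap
      (x := algebraMap (ZMod 2) (Algebra.adjoin (ZMod 2) (Set.range ![w2, w3])) a)
  | add p q hp hq => exact hp.add hq
  | mul_X p i hp =>
    refine hp.mul ?_
    let a : Algebra.adjoin (ZMod 2) (Set.range ![w2, w3]) :=
      ⟨w2, Algebra.subset_adjoin ⟨0, rfl⟩⟩
    let b : Algebra.adjoin (ZMod 2) (Set.range ![w2, w3]) :=
      ⟨w3, Algebra.subset_adjoin ⟨1, rfl⟩⟩
    refine ⟨Polynomial.X ^ 3 + Polynomial.C a * Polynomial.X + Polynomial.C b, ?_, ?_⟩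
    · monicity!
    · simpa [a, b, Subalgebra.algebraMap_def] using dickson_root i

/-- The Dickson invariants `w₂` and `w₃` are algebraically independent over `ℤ/2`:
the algebra map from the polynomial ring in two indeterminates sending `u ↦ w₂`,
`v ↦ w₃` is injective. -/
theorem dickson_algebraically_independent :
    Function.Injective
      (aeval ![w2, w3] :
        MvPolynomial (Fin 2) (ZMod 2) →ₐ[ZMod 2] MvPolynomial (Fin 2) (ZMod 2)) := by
  have : Algebra.IsAlgebraic (Algebra.adjoin (ZMod 2) (Set.range ![w2, w3]))
      (MvPolynomial (Fin 2) (ZMod 2)) :=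
    ⟨fun p => (dickson_isIntegral p).isAlgebraic⟩
  exact (Algebra.IsAlgebraic.isTranscendenceBasis_of_le_trdeg_of_finite (ZMod 2) ![w2, w3]
    (by rw [MvPolynomial.trdeg_of_isDomain]; simp)).1
end
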